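/- There exist positive numerical constants ρ_r ≤ 1/10, ρ_s, and c such that the following holds. Under the observation model with incoherence parameter ν, if r ≤ ρ_r · n2 · ν⁻¹ · (log n1)⁻² and m ≤ ρ_s · n1 · n2, then with probability at least 1 − c·n1^{−10} over the random support Ω and the random signs, every minimizer (L̂, Ŝ) of the √PCP problem with λ = 1/√n1 and μ = √(n2/2) satisfies ‖(L̂, Ŝ) − (L0, S0)‖_F ≤ 560·√(n1·n2)·‖Z0‖_F. -/

import Mathlib

open Matrix
open scoped BigOperators

/-- Frobenius norm of a real matrix. -/
noncomputable def frob {n1 n2 : ℕ} (A : Matrix (Fin n1) (Fin n2) ℝ) : ℝ :=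
  Real.sqrt (∑ i, ∑ j, A i j ^ 2)

/-- Entrywise ℓ¹ norm. -/
noncomputable def l1norm {n1 n2 : ℕ} (A : Matrix (Fin n1) (Fin n2) ℝ) : ℝ :=
  ∑ i, ∑ j, |A i j|

/-- Trace inner product ⟨A,B⟩ = trace(AᵀB). -/
noncomputable def minner {n1 n2 : ℕ} (A B : Matrix (Fin n1) (Fin n2) ℝ) : ℝ :=
  ∑ i, ∑ j, A i j * B i j

/-- Spectral norm (largest singular value), as the ℓ²→ℓ² operator norm. -/
noncomputable def spec {n1 n2 : ℕ} (A : Matrix (Fin n1) (Fin n2) ℝ) : ℝ :=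
  sSup {c : ℝ | ∃ x : Fin n2 → ℝ, (∑ j, x j ^ 2) ≤ 1 ∧
    c = Real.sqrt (∑ i, (∑ j, A i j * x j) ^ 2)}

/-- Nuclear norm (sum of singular values), via duality with the spectral norm. -/
noncomputable def nuc {n1 n2 : ℕ} (A : Matrix (Fin n1) (Fin n2) ℝ) : ℝ :=
  sSup {c : ℝ | ∃ B : Matrix (Fin n1) (Fin n2) ℝ, spec B ≤ 1 ∧ c = minner A B}

/-- P_Ω: the matrix agreeing with `M` on `Ω` and zero off `Ω`. -/
noncomputable def projS {n1 n2 : ℕ} (Ω : Finset (Fin n1 × Fin n2))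
    (M : Matrix (Fin n1) (Fin n2) ℝ) : Matrix (Fin n1) (Fin n2) ℝ :=
  Matrix.of fun i j => if (i, j) ∈ Ω then M i j else 0

/-- Entrywise sign matrix. -/
noncomputable def signM {n1 n2 : ℕ} (A : Matrix (Fin n1) (Fin n2) ℝ) :
    Matrix (Fin n1) (Fin n2) ℝ :=
  Matrix.of fun i j => Real.sign (A i j)

/-- The tangent space T = {UQᵀ + RVᵀ}. -/
def memT {n1 n2 r : ℕ} (U : Matrix (Fin n1) (Fin r) ℝ) (V : Matrix (Fin n2) (Fin r) ℝ)
    (M : Matrix (Fin n1) (Fin n2) ℝ) : Prop :=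
  ∃ (Q : Matrix (Fin n2) (Fin r) ℝ) (R : Matrix (Fin n1) (Fin r) ℝ), M = U * Qᵀ + R * Vᵀ

/-- Membership in T⊥, the orthogonal complement of the tangent space. -/
def memTperp {n1 n2 r : ℕ} (U : Matrix (Fin n1) (Fin r) ℝ) (V : Matrix (Fin n2) (Fin r) ℝ)
    (W : Matrix (Fin n1) (Fin n2) ℝ) : Prop :=
  ∀ M, memT U V M → minner W M = 0

/-- (L̂, Ŝ) is a global minimizer of the √PCP objective
`‖L‖_* + λ‖S‖₁ + μ‖L + S − D‖_F`. -/
def IsRootPCPMin {n1 n2 : ℕ} (D : Matrix (Fin n1) (Fin n2) ℝ) (lam mu : ℝ)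
    (Lh Sh : Matrix (Fin n1) (Fin n2) ℝ) : Prop :=
  ∀ L S : Matrix (Fin n1) (Fin n2) ℝ,
    nuc Lh + lam * l1norm Sh + mu * frob (Lh + Sh - D) ≤
      nuc L + lam * l1norm S + mu * frob (L + S - D)

/-- (L̂, Ŝ) is a minimizer of StablePCP_c(δ):
minimize `‖L‖_* + λ‖S‖₁` subject to `‖L + S − D‖_F ≤ δ`. -/
def IsStablePCPMin {n1 n2 : ℕ} (D : Matrix (Fin n1) (Fin n2) ℝ) (lam δ : ℝ)
    (Lh Sh : Matrix (Fin n1) (Fin n2) ℝ) : Prop :=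
  frob (Lh + Sh - D) ≤ δ ∧
    ∀ L S : Matrix (Fin n1) (Fin n2) ℝ, frob (L + S - D) ≤ δ →
      nuc Lh + lam * l1norm Sh ≤ nuc L + lam * l1norm S

/-- Frobenius distance between pairs: ‖(L,S) − (L',S')‖_F. -/
noncomputable def pairDist {n1 n2 : ℕ} (L S L' S' : Matrix (Fin n1) (Fin n2) ℝ) : ℝ :=
  Real.sqrt (frob (L - L') ^ 2 + frob (S - S') ^ 2)

/-- Sample space of the random sparsity model: a uniformly random support of
cardinality m together with iid uniform random signs. -/
abbrev SampleSpace (n1 n2 m : ℕ) : Type :=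
  {Ω : Finset (Fin n1 × Fin n2) // Ω.card = m} × ((Fin n1 × Fin n2) → Bool)

/-- The sparse matrix S0 built from fixed magnitudes `a` and a random sample:
S0 vanishes off Ω and equals ±a on Ω according to the random signs. -/
noncomputable def sparseOf {n1 n2 m : ℕ} (a : Fin n1 × Fin n2 → ℝ) (ω : SampleSpace n1 n2 m) :
    Matrix (Fin n1) (Fin n2) ℝ :=
  Matrix.of fun i j =>
    if (i, j) ∈ ω.1.1 then (if ω.2 (i, j) then a (i, j) else -a (i, j)) else 0

open Classical in
/-- Uniform probability of an event on a finite sample space. -/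
noncomputable def unifProb {α : Type*} [Fintype α] (E : α → Prop) : ℝ :=
  ((Finset.univ.filter fun a => E a).card : ℝ) / (Fintype.card α : ℝ)

/-!
A dual certificate `Λ` for `(L₀, S₀)`, together with the transversality of the tangent space `T` at
`L₀` and the support `Ω`, makes the error of every √PCP minimizer proportional to the noise.

The certificate is the sum of two parts. The golfing scheme splits the complement of `Ω` into
independent batches and iteratively produces a matrix supported off `Ω` whose projection to `T` is
close to `U Vᵀ`. The other part is `λ sgn S₀` corrected off `Ω` by least squares so that it becomes
orthogonal to `T`. Spectral norms of random sign matrices are controlled by nets of the spheres, and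
the norm of `P_Ω P_T` by the moments of the trace of its powers, where resampling one coordinate at
a time replaces decoupling. All this is done for a Bernoulli support; since `m` is the mode of the
binomial distribution with mean `m`, passing to a uniform support of size `m` costs only a factor
`n₁ n₂ + 1`.
-/

namespace SqrtPCP

open scoped Matrix.Norms.L2Operator
open MeasureTheory ProbabilityTheory unitInterval

/-! ### Euclidean norms, spectral bounds and projections -/

section LinearAlgebra

variable {ι κ : Type*} [Fintype ι] [Fintype κ]

/-- The Euclidean norm of a finite real family; `‖v‖` itself would be the supremum norm. -/
noncomputable def l2norm (v : ι → ℝ) : ℝ := ‖WithLp.toLp 2 v‖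

lemma l2norm_nonneg (v : ι → ℝ) : 0 ≤ l2norm v := norm_nonneg _

lemma l2norm_sq (v : ι → ℝ) : l2norm v ^ 2 = ∑ e, v e ^ 2 := by
  simp [l2norm, EuclideanSpace.norm_sq_eq]

lemma dotProduct_self_eq_l2norm_sq (v : ι → ℝ) : v ⬝ᵥ v = l2norm v ^ 2 := by
  rw [l2norm_sq]
  exact Finset.sum_congr rfl fun e _ => (sq _).symm

lemma l2norm_eq_sqrt (v : ι → ℝ) : l2norm v = √(∑ e, v e ^ 2) := by
  rw [← l2norm_sq, Real.sqrt_sq (l2norm_nonneg v)]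

lemma l2norm_add_le (v w : ι → ℝ) : l2norm (v + w) ≤ l2norm v + l2norm w :=
  norm_add_le (WithLp.toLp 2 v) (WithLp.toLp 2 w)

lemma l2norm_sub_le (v w : ι → ℝ) : l2norm (v - w) ≤ l2norm v + l2norm w :=
  norm_sub_le (WithLp.toLp 2 v) (WithLp.toLp 2 w)

lemma l2norm_neg (v : ι → ℝ) : l2norm (-v) = l2norm v := norm_neg (WithLp.toLp 2 v)

lemma l2norm_smul (c : ℝ) (v : ι → ℝ) : l2norm (c • v) = |c| * l2norm v :=
  norm_smul c (WithLp.toLp 2 v)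

lemma inner_toLp (v w : ι → ℝ) : inner ℝ (WithLp.toLp 2 v) (WithLp.toLp 2 w) = v ⬝ᵥ w := by
  simp [EuclideanSpace.inner_toLp_toLp, dotProduct_comm]

lemma abs_dotProduct_le (v w : ι → ℝ) : |v ⬝ᵥ w| ≤ l2norm v * l2norm w :=
  inner_toLp v w ▸ abs_real_inner_le_norm _ _

lemma l2norm_mulVec_le [DecidableEq κ] (A : Matrix ι κ ℝ) (v : κ → ℝ) :
    l2norm (A *ᵥ v) ≤ ‖A‖ * l2norm v :=
  l2_opNorm_mulVec A (WithLp.toLp 2 v)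

lemma dotProduct_mulVec_le [DecidableEq κ] (A : Matrix ι κ ℝ) (x : ι → ℝ) (y : κ → ℝ) :
    x ⬝ᵥ (A *ᵥ y) ≤ ‖A‖ * (l2norm x * l2norm y) :=
  calc x ⬝ᵥ (A *ᵥ y) ≤ l2norm x * l2norm (A *ᵥ y) := (le_abs_self _).trans (abs_dotProduct_le _ _)
    _ ≤ l2norm x * (‖A‖ * l2norm y) :=
        mul_le_mul_of_nonneg_left (l2norm_mulVec_le A y) (l2norm_nonneg x)
    _ = _ := by ring

lemma opNorm_le_of_l2norm_mulVec_le [DecidableEq κ] {A : Matrix ι κ ℝ} {c : ℝ} (hc : 0 ≤ c)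
    (h : ∀ v, l2norm (A *ᵥ v) ≤ c * l2norm v) : ‖A‖ ≤ c :=
  ContinuousLinearMap.opNorm_le_bound _ hc fun v => h v.ofLp

lemma opNorm_le_of_dotProduct_mulVec_le [DecidableEq κ] {A : Matrix ι κ ℝ} {c : ℝ} (hc : 0 ≤ c)
    (h : ∀ x y, x ⬝ᵥ (A *ᵥ y) ≤ c * (l2norm x * l2norm y)) : ‖A‖ ≤ c := by
  refine opNorm_le_of_l2norm_mulVec_le hc fun v => ?_
  rcases (l2norm_nonneg (A *ᵥ v)).eq_or_lt with hzero | hpos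
  · exact hzero ▸ mul_nonneg hc (l2norm_nonneg v)
  · have hself := h (A *ᵥ v) v
    rw [dotProduct_self_eq_l2norm_sq] at hself
    exact le_of_mul_le_mul_right (by linarith) hpos

variable {G : Matrix ι ι ℝ}

lemma isStarProjection_iff_transpose :
    IsStarProjection G ↔ G * G = G ∧ Gᵀ = G := by
  rw [isStarProjection_iff, IsIdempotentElem, IsSelfAdjoint, star_eq_conjTranspose,
    conjTranspose_eq_transpose_of_trivial]

lemma proj_transpose (hG : IsStarProjection G) : Gᵀ = G := (isStarProjection_iff_transpose.1 hG).2

lemma proj_mulVec_mulVec (hG : IsStarProjection G) (v : ι → ℝ) : G *ᵥ (G *ᵥ v) = G *ᵥ v := by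
  rw [mulVec_mulVec, hG.isIdempotentElem.eq]

lemma proj_dotProduct_comm (hG : IsStarProjection G) (u v : ι → ℝ) :
    (G *ᵥ u) ⬝ᵥ v = u ⬝ᵥ (G *ᵥ v) := by
  rw [dotProduct_mulVec, ← mulVec_transpose, proj_transpose hG]

lemma proj_apply_comm (hG : IsStarProjection G) (e f : ι) : G e f = G f e :=
  congrFun₂ (proj_transpose hG) f e

lemma proj_row_dotProduct_self (hG : IsStarProjection G) (e : ι) : G e ⬝ᵥ G e = G e e := by
  conv_rhs => rw [← hG.isIdempotentElem.eq, Matrix.mul_apply]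
  exact Finset.sum_congr rfl fun k _ => by rw [proj_apply_comm hG k e]

lemma proj_diag_nonneg (hG : IsStarProjection G) (e : ι) : 0 ≤ G e e := by
  rw [← proj_row_dotProduct_self hG, dotProduct_self_eq_l2norm_sq]
  positivity

lemma sum_proj_row_sq (hG : IsStarProjection G) (e : ι) : ∑ f, G e f ^ 2 = G e e := by
  rw [← l2norm_sq, ← dotProduct_self_eq_l2norm_sq, proj_row_dotProduct_self hG]

lemma abs_proj_apply_le (hG : IsStarProjection G) {μ₀ : ℝ} (hμ : ∀ e, G e e ≤ μ₀) (e f : ι) :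
    |G e f| ≤ μ₀ := by
  have hnorm : ∀ e, l2norm (G e) ^ 2 ≤ μ₀ := fun e => by
    rw [← dotProduct_self_eq_l2norm_sq, proj_row_dotProduct_self hG]
    exact hμ e
  have hGef : G e f = G e ⬝ᵥ G f := by
    conv_lhs => rw [← hG.isIdempotentElem.eq, Matrix.mul_apply]
    exact Finset.sum_congr rfl fun k _ => by rw [proj_apply_comm hG k f]
  rw [hGef]
  refine (abs_dotProduct_le _ _).trans ?_
  linarith [hnorm e, hnorm f, two_mul_le_add_sq (l2norm (G e)) (l2norm (G f))]

lemma proj_mul_mul_apply_self (hG : IsStarProjection G) (X : Matrix ι ι ℝ) (e : ι) :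
    (G * X * G) e e = G e ⬝ᵥ (X *ᵥ G e) := by
  rw [Matrix.mul_apply, dotProduct_mulVec]
  exact Finset.sum_congr rfl fun k _ => by rw [proj_apply_comm hG k e]; rfl

lemma l2norm_proj_mulVec_le (hG : IsStarProjection G) (v : ι → ℝ) : l2norm (G *ᵥ v) ≤ l2norm v := by
  classical
  exact (l2norm_mulVec_le G v).trans (mul_le_of_le_one_left (l2norm_nonneg v) hG.norm_le)

variable [DecidableEq ι]

lemma exists_forall_pow_eq_conj_diagonal {A : Matrix ι ι ℝ} (hA : A.IsHermitian) :
    ∃ (ev : ι → ℝ) (Q : unitaryGroup ι ℝ), ∀ n : ℕ,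
      A ^ n = (Q : Matrix ι ι ℝ) * diagonal (fun i => ev i ^ n) * (Q : Matrix ι ι ℝ)ᵀ := by
  refine ⟨hA.eigenvalues, hA.eigenvectorUnitary, fun n => ?_⟩
  conv_lhs => rw [hA.spectral_theorem, ← map_pow, diagonal_pow]
  rw [Unitary.conjStarAlgAut_apply, star_eq_conjTranspose,
    conjTranspose_eq_transpose_of_trivial]
  rfl

lemma transpose_mul_self_of_mem_unitaryGroup (Q : unitaryGroup ι ℝ) :
    (Q : Matrix ι ι ℝ)ᵀ * (Q : Matrix ι ι ℝ) = 1 := by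
  simpa [star_eq_conjTranspose] using mem_unitaryGroup_iff'.1 Q.2

lemma exists_forall_quadForm_pow_eq_sum {A : Matrix ι ι ℝ} (hA : A.IsHermitian) (a : ι → ℝ) :
    ∃ ev c : ι → ℝ, ∀ n : ℕ, a ⬝ᵥ (A ^ n *ᵥ a) = ∑ i, ev i ^ n * c i ^ 2 := by
  obtain ⟨ev, Q, hQ⟩ := exists_forall_pow_eq_conj_diagonal hA
  refine ⟨ev, (Q : Matrix ι ι ℝ)ᵀ *ᵥ a, fun n => ?_⟩
  rw [hQ, ← mulVec_mulVec, ← mulVec_mulVec, dotProduct_mulVec, ← mulVec_transpose]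
  simp only [dotProduct, mulVec_diagonal]
  exact Finset.sum_congr rfl fun i _ => by ring

lemma quadForm_even_pow_nonneg {A : Matrix ι ι ℝ} (hA : A.IsHermitian) (a : ι → ℝ) (m : ℕ) :
    0 ≤ a ⬝ᵥ (A ^ (2 * m) *ᵥ a) := by
  obtain ⟨ev, c, h⟩ := exists_forall_quadForm_pow_eq_sum hA a
  rw [h]
  exact Finset.sum_nonneg fun i _ => mul_nonneg ((even_two_mul m).pow_nonneg _) (sq_nonneg _)

lemma norm_pow_le_trace_pow {A : Matrix ι ι ℝ} (hA : A.IsHermitian) {m : ℕ} (hm : m ≠ 0) :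
    ‖A‖ ^ (2 * m) ≤ (A ^ (2 * m)).trace := by
  obtain ⟨ev, Q, hQ⟩ := exists_forall_pow_eq_conj_diagonal hA
  have htrace : (A ^ (2 * m)).trace = ∑ i, ev i ^ (2 * m) := by
    rw [hQ, trace_mul_comm, ← Matrix.mul_assoc, transpose_mul_self_of_mem_unitaryGroup,
      Matrix.one_mul, trace_diagonal]
  have hnorm : ‖A‖ = ‖ev‖ := by
    have h := hQ 1
    rw [pow_one, ← conjTranspose_eq_transpose_of_trivial, ← star_eq_conjTranspose,
      ← Unitary.coe_star] at h
    rw [h, CStarRing.norm_mul_coe_unitary, CStarRing.norm_coe_unitary_mul, l2_opNorm_diagonal]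
    simp
  have hterm : ∀ i, |ev i| ^ (2 * m) ≤ (A ^ (2 * m)).trace := fun i => by
    rw [(even_two_mul m).pow_abs, htrace]
    exact Finset.single_le_sum (f := fun i => ev i ^ (2 * m))
      (fun j _ => (even_two_mul m).pow_nonneg (ev j)) (Finset.mem_univ i)
  rcases isEmpty_or_nonempty ι with hι | hι
  · simp [hnorm, Subsingleton.elim ev 0, hm]
  · obtain ⟨i, hi⟩ := Finite.exists_max fun i => ‖ev i‖
    rw [hnorm, show ‖ev‖ = |ev i| from
      le_antisymm ((pi_norm_le_iff_of_nonneg (norm_nonneg _)).2 hi) (norm_le_pi_norm ev i)]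
    exact hterm i

lemma pow_mul_pow_le_add (x y : ℝ) {q n : ℕ} (hn : Even n) (hq : q ≤ n) :
    x ^ q * y ^ (n - q) ≤ x ^ n + y ^ n := by
  have habs : x ^ q * y ^ (n - q) ≤ |x| ^ q * |y| ^ (n - q) := by
    rw [← abs_pow, ← abs_pow, ← abs_mul]
    exact le_abs_self _
  have hmax : |x| ^ q * |y| ^ (n - q) ≤ max |x| |y| ^ n :=
    calc |x| ^ q * |y| ^ (n - q) ≤ max |x| |y| ^ q * max |x| |y| ^ (n - q) := by
          gcongr
          exacts [le_max_left _ _, le_max_right _ _]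
      _ = max |x| |y| ^ n := by rw [← pow_add, Nat.add_sub_cancel' hq]
  refine (habs.trans hmax).trans ?_
  rcases max_choice |x| |y| with h | h <;> rw [h, hn.pow_abs]
  · exact le_add_of_nonneg_right (hn.pow_nonneg y)
  · exact le_add_of_nonneg_left (hn.pow_nonneg x)

lemma quadForm_pow_mul_le {A B : Matrix ι ι ℝ} (hA : A.IsHermitian) (hB : B.IsHermitian)
    (a : ι → ℝ) {q n : ℕ} (hn : Even n) (hq : q ≤ n) :
    (a ⬝ᵥ (A ^ q *ᵥ a)) * (a ⬝ᵥ (B ^ (n - q) *ᵥ a)) ≤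
      (a ⬝ᵥ a) * (a ⬝ᵥ (A ^ n *ᵥ a) + a ⬝ᵥ (B ^ n *ᵥ a)) := by
  obtain ⟨x, c, hc⟩ := exists_forall_quadForm_pow_eq_sum hA a
  obtain ⟨y, d, hd⟩ := exists_forall_quadForm_pow_eq_sum hB a
  have hc0 : a ⬝ᵥ a = ∑ i, c i ^ 2 := by simpa using hc 0
  have hd0 : a ⬝ᵥ a = ∑ i, d i ^ 2 := by simpa using hd 0
  calc (a ⬝ᵥ (A ^ q *ᵥ a)) * (a ⬝ᵥ (B ^ (n - q) *ᵥ a))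
      = ∑ i, ∑ j, x i ^ q * y j ^ (n - q) * (c i ^ 2 * d j ^ 2) := by
        rw [hc, hd, Finset.sum_mul_sum]
        exact Finset.sum_congr rfl fun i _ => Finset.sum_congr rfl fun j _ => by ring
    _ ≤ ∑ i, ∑ j, (x i ^ n + y j ^ n) * (c i ^ 2 * d j ^ 2) := by
        gcongr
        exact pow_mul_pow_le_add _ _ hn hq
    _ = (∑ i, x i ^ n * c i ^ 2) * (∑ j, d j ^ 2) +
          (∑ i, c i ^ 2) * ∑ j, y j ^ n * d j ^ 2 := by
        simp only [Finset.sum_mul_sum, ← Finset.sum_add_distrib]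
        exact Finset.sum_congr rfl fun i _ => Finset.sum_congr rfl fun j _ => by ring
    _ = _ := by rw [← hc0, ← hd0, ← hc, ← hd]; ring

/-- The coordinate projection onto the entries selected by `b` (`P_Ω` for the support `Ω`
indicated by `b`). -/
def coordProj (b : ι → Bool) : Matrix ι ι ℝ := diagonal fun e => if b e then 1 else 0

lemma coordProj_mulVec_apply (b : ι → Bool) (v : ι → ℝ) (e : ι) :
    (coordProj b *ᵥ v) e = if b e then v e else 0 := by
  simp [coordProj, mulVec_diagonal]

lemma isStarProjection_coordProj (b : ι → Bool) : IsStarProjection (coordProj b) := by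
  rw [isStarProjection_iff_transpose]
  simp [coordProj]

end LinearAlgebra

/-! ### Matrices as vectors indexed by pairs -/

section ToMat

variable {m n : Type*}

/-- The matrix with a given vector of entries; matrices are vectors indexed by pairs whenever they
are acted on by linear maps. -/
def toMat : (m × n → ℝ) ≃ₗ[ℝ] Matrix m n ℝ :=
  LinearEquiv.curry ℝ ℝ m n ≪≫ₗ Matrix.ofLinearEquiv ℝ

lemma toMat_apply (f : m × n → ℝ) (i : m) (j : n) : toMat f i j = f (i, j) := rfl

lemma toMat_symm_apply (A : Matrix m n ℝ) (p : m × n) : toMat.symm A p = A p.1 p.2 := rfl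

variable [Fintype m] [Fintype n]

lemma dotProduct_toMat_mulVec (x : m → ℝ) (f : m × n → ℝ) (y : n → ℝ) :
    x ⬝ᵥ (toMat f *ᵥ y) = (fun p => x p.1 * y p.2) ⬝ᵥ f := by
  simp only [dotProduct, mulVec, toMat_apply, Fintype.sum_prod_type, Finset.mul_sum]
  exact Finset.sum_congr rfl fun i _ => Finset.sum_congr rfl fun j _ => by ring

lemma l2norm_mul_prod (x : m → ℝ) (y : n → ℝ) :
    l2norm (fun p : m × n => x p.1 * y p.2) = l2norm x * l2norm y := by
  rw [← sq_eq_sq₀ (l2norm_nonneg _) (mul_nonneg (l2norm_nonneg _) (l2norm_nonneg _)), mul_pow]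
  simp only [l2norm_sq, Fintype.sum_prod_type, mul_pow, Finset.sum_mul_sum]

end ToMat

/-! ### Product measures on finite families of bits -/

section Pi

variable {ι : Type*} [Fintype ι] {Ω : Type*} [MeasurableSpace Ω] {μ : Measure Ω}

lemma measurePreserving_update [DecidableEq ι] [IsProbabilityMeasure μ] (e : ι) :
    MeasurePreserving (fun z : Ω × (ι → Ω) => Function.update z.2 e z.1)
      (μ.prod (Measure.pi fun _ => μ)) (Measure.pi fun _ => μ) where
  measurable := by fun_prop
  map_eq := by
    refine (Measure.pi_eq fun s hs => ?_).symm
    rw [Measure.map_apply (by fun_prop) (MeasurableSet.univ_pi hs)]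
    have hpre : (fun z : Ω × (ι → Ω) => Function.update z.2 e z.1) ⁻¹' Set.univ.pi s =
        s e ×ˢ Set.univ.pi (Function.update s e Set.univ) := by
      ext ⟨x, b⟩
      simp only [Set.mem_preimage, Set.mem_pi, Set.mem_univ, true_imp_iff, Set.mem_prod]
      refine ⟨fun h => ⟨by simpa using h e, fun i => ?_⟩, fun h i => ?_⟩
      · rcases eq_or_ne i e with rfl | hi
        · simp
        · simpa [hi] using h i
      · rcases eq_or_ne i e with rfl | hi
        · simpa using h.1
        · simpa [hi] using h.2 i
    rw [hpre, Measure.prod_prod, Measure.pi_pi, ← Finset.mul_prod_erase _ _ (Finset.mem_univ e),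
      ← Finset.mul_prod_erase _ _ (Finset.mem_univ e)]
    simp only [Function.update_self, measure_univ, one_mul]
    refine congrArg _ (Finset.prod_congr rfl fun i hi => ?_)
    rw [Function.update_of_ne (Finset.ne_of_mem_erase hi)]

lemma hasSubgaussianMGF_mono {X : Ω → ℝ} {c d : NNReal} (h : HasSubgaussianMGF X c μ)
    (hcd : c ≤ d) : HasSubgaussianMGF X d μ where
  integrable_exp_mul := h.integrable_exp_mul
  mgf_le t := (h.mgf_le t).trans (Real.exp_le_exp.2 (by gcongr))

lemma hasSubgaussianMGF_sum_pi {X : Ω → ℝ} {κ B : NNReal} [IsProbabilityMeasure μ]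
    (hX : HasSubgaussianMGF X κ μ) {c : ι → ℝ} (hc : ∑ e, c e ^ 2 ≤ B) :
    HasSubgaussianMGF (fun ω : ι → Ω => ∑ e, c e * X (ω e)) (B * κ) (Measure.pi fun _ => μ) := by
  have hind : iIndepFun (fun e (ω : ι → Ω) => c e * X (ω e)) (Measure.pi fun _ : ι => μ) :=
    iIndepFun_pi (X := fun e x => c e * X x) fun e => hX.aemeasurable.const_mul (c e)
  have hcoord : ∀ e : ι, HasSubgaussianMGF (fun ω : ι → Ω => X (ω e)) κ
      (Measure.pi fun _ : ι => μ) := fun e => by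
    have hev := measurePreserving_eval (fun _ : ι => μ) e
    exact HasSubgaussianMGF.of_map hev.measurable.aemeasurable (by rwa [hev.map_eq])
  refine hasSubgaussianMGF_mono (HasSubgaussianMGF.sum_of_iIndepFun hind fun e _ =>
    (hcoord e).const_mul (c e)) ?_
  rw [← NNReal.coe_le_coe, NNReal.coe_sum]
  exact (Finset.sum_mul _ _ _).symm.trans_le (mul_le_mul_of_nonneg_right hc κ.2)

lemma measureReal_lt_abs_le {X : Ω → ℝ} {s τ B : ℝ} [IsFiniteMeasure μ] (hs : 0 ≤ s)
    (hint : ∀ t, Integrable (fun ω => Real.exp (t * X ω)) μ)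
    (hpos : mgf X μ s ≤ Real.exp B) (hneg : mgf X μ (-s) ≤ Real.exp B) :
    μ.real {ω | τ < |X ω|} ≤ 2 * Real.exp (B - s * τ) := by
  have hexp : Real.exp (-s * τ) * Real.exp B = Real.exp (B - s * τ) := by
    rw [← Real.exp_add]; congr 1; ring
  have hright : μ.real {ω | τ ≤ X ω} ≤ Real.exp (B - s * τ) :=
    hexp ▸ (measure_ge_le_exp_mul_mgf τ hs (hint s)).trans (by gcongr)
  have hleft : μ.real {ω | X ω ≤ -τ} ≤ Real.exp (B - s * τ) := by
    have h := measure_le_le_exp_mul_mgf (-τ) (neg_nonpos.2 hs) (hint (-s))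
    rw [neg_neg, mul_neg, ← neg_mul] at h
    exact hexp ▸ h.trans (by gcongr)
  have hsub : {ω | τ < |X ω|} ⊆ {ω | τ ≤ X ω} ∪ {ω | X ω ≤ -τ} := fun ω (hω : τ < |X ω|) =>
    (lt_abs.1 hω).imp (fun h : τ < X ω => h.le) fun h : τ < -X ω => le_neg_of_le_neg h.le
  linarith [(measureReal_mono hsub).trans (measureReal_union_le (μ := μ) _ _)]

lemma measureReal_lt_abs_le_of_subgaussian {X : Ω → ℝ} {c : NNReal} [IsFiniteMeasure μ]
    (hX : HasSubgaussianMGF X c μ) (hc : 0 < c) {τ : ℝ} (hτ : 0 ≤ τ) :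
    μ.real {ω | τ < |X ω|} ≤ 2 * Real.exp (-τ ^ 2 / (2 * c)) := by
  have hc' : (c : ℝ) ≠ 0 := by exact_mod_cast hc.ne'
  have hneg := hX.mgf_le (-(τ / c))
  rw [neg_sq] at hneg
  refine (measureReal_lt_abs_le (s := τ / c) (by positivity) hX.integrable_exp_mul
    (hX.mgf_le _) hneg).trans (le_of_eq ?_)
  congr 2
  field_simp
  ring

lemma measureReal_exists_le [IsFiniteMeasure μ] (E : ι → Ω → Prop) {t : ℝ}
    (h : ∀ i, μ.real {ω | E i ω} ≤ t) :
    μ.real {ω | ∃ i, E i ω} ≤ Fintype.card ι * t := by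
  have hU : {ω | ∃ i, E i ω} = ⋃ i ∈ Finset.univ, {ω | E i ω} := by ext ω; simp
  rw [hU]
  refine (measureReal_biUnion_finset_le _ _).trans ((Finset.sum_le_sum fun i _ => h i).trans ?_)
  simp

lemma measureReal_prod_le_add {Ω' : Type*} [MeasurableSpace Ω'] [Finite Ω] [Finite Ω']
    [MeasurableSingletonClass Ω] [MeasurableSingletonClass Ω'] [IsProbabilityMeasure μ]
    {ν : Measure Ω'} [IsProbabilityMeasure ν] {B : Set Ω} {E : Set (Ω × Ω')} {t : ℝ}
    (ht : 0 ≤ t) (hE : ∀ ω ∉ B, ν.real {ω' | (ω, ω') ∈ E} ≤ t) :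
    (μ.prod ν).real E ≤ μ.real B + t := by
  have hpoint : ∀ ω, ν.real {ω' | (ω, ω') ∈ E} ≤ B.indicator 1 ω + t := by
    intro ω
    by_cases hω : ω ∈ B
    · rw [Set.indicator_of_mem hω, Pi.one_apply]
      linarith [measureReal_le_one (μ := ν) (s := {ω' | (ω, ω') ∈ E})]
    · rw [Set.indicator_of_notMem hω, zero_add]
      exact hE ω hω
  calc (μ.prod ν).real E = ∫ ω, ν.real {ω' | (ω, ω') ∈ E} ∂μ := by
        rw [← integral_indicator_one E.toFinite.measurableSet,
          integral_prod _ Integrable.of_finite]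
        exact integral_congr_ae (.of_forall fun ω =>
          integral_indicator_one (Set.toFinite {ω' | (ω, ω') ∈ E}).measurableSet)
    _ ≤ ∫ ω, (B.indicator 1 ω + t) ∂μ :=
        integral_mono Integrable.of_finite Integrable.of_finite hpoint
    _ = μ.real B + t := by
        rw [integral_add Integrable.of_finite Integrable.of_finite,
          integral_indicator_one B.toFinite.measurableSet]
        simp

end Pi

section Bernoulli

variable {ι : Type*} [Fintype ι]

/-- The law of a family of independent bits indexed by `ι`, each `true` with probability `p`. -/
noncomputable abbrev bernoulliPi (ι : Type*) [Fintype ι] (p : I) : Measure (ι → Bool) :=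
  Measure.pi fun _ => bernoulliMeasure true false p

lemma integral_bernoulliPi_update [DecidableEq ι] (p : I) (e : ι) (f : (ι → Bool) → ℝ) :
    ∫ b, f b ∂bernoulliPi ι p = ∫ b, (p * f (Function.update b e true) +
      (1 - p) * f (Function.update b e false)) ∂bernoulliPi ι p := by
  conv_lhs => rw [bernoulliPi, ← (measurePreserving_update e).map_eq]
  rw [integral_map (by fun_prop) Measurable.of_discrete.aestronglyMeasurable,
    integral_prod_symm _ Integrable.of_finite]
  simp only [integral_bernoulliMeasure, smul_eq_mul]

lemma map_and_bernoulliPi (p q : I) :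
    ((bernoulliPi ι p).prod (bernoulliPi ι q)).map (fun z e => z.1 e && z.2 e) =
      bernoulliPi ι (p * q) := by
  have hbit : MeasurePreserving (fun z : Bool × Bool => z.1 && z.2)
      ((bernoulliMeasure true false p).prod (bernoulliMeasure true false q))
      (bernoulliMeasure true false (p * q)) := by
    refine ⟨Measurable.of_discrete, ext_of_forall_integral_eq_of_IsFiniteMeasure fun f => ?_⟩
    rw [integral_map (by fun_prop) Measurable.of_discrete.aestronglyMeasurable,
      integral_prod _ Integrable.of_finite]
    simp only [integral_bernoulliMeasure, smul_eq_mul, Bool.true_and, Bool.false_and,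
      Set.Icc.coe_mul]
    ring
  have hpi := measurePreserving_pi (fun _ : ι => _) (fun _ : ι => _) fun _ => hbit
  have harrow := (measurePreserving_arrowProdEquivProdArrow Bool Bool ι
    (fun _ => bernoulliMeasure true false p) (fun _ => bernoulliMeasure true false q)).symm
  exact (hpi.comp harrow).map_eq

lemma sparse_cosh_le_of_abs_le {κ ρ t T : ℝ} (hρ : 0 ≤ ρ) (ht : |t| ≤ T)
    (h : ρ * Real.exp (T ^ 2 / 2) ≤ κ) : 1 - ρ + ρ * Real.cosh t ≤ Real.exp (κ * t ^ 2 / 2) := by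
  have htT : t ^ 2 / 2 ≤ T ^ 2 / 2 := by
    have := sq_le_sq' (by linarith [neg_abs_le t]) ((le_abs_self t).trans ht)
    linarith
  have hexp : Real.exp (t ^ 2 / 2) - 1 ≤ t ^ 2 / 2 * Real.exp (t ^ 2 / 2) := by
    have hinv : Real.exp (t ^ 2 / 2) * Real.exp (-(t ^ 2 / 2)) = 1 := by
      rw [← Real.exp_add]; simp
    nlinarith [Real.add_one_le_exp (-(t ^ 2 / 2)), Real.exp_pos (t ^ 2 / 2)]
  have hcosh : ρ * (Real.cosh t - 1) ≤ κ * t ^ 2 / 2 := by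
    calc ρ * (Real.cosh t - 1) ≤ ρ * (t ^ 2 / 2 * Real.exp (T ^ 2 / 2)) := by
          refine mul_le_mul_of_nonneg_left ?_ hρ
          have := Real.exp_le_exp.2 htT
          nlinarith [Real.cosh_le_exp_half_sq t, sq_nonneg t]
      _ = (ρ * Real.exp (T ^ 2 / 2)) * (t ^ 2 / 2) := by ring
      _ ≤ κ * (t ^ 2 / 2) := by gcongr
      _ = _ := by ring
  linarith [Real.add_one_le_exp (κ * t ^ 2 / 2)]

lemma cosh_le_of_le_abs {κ t : ℝ} (hκ : 0 < κ) (ht : 2 / κ ≤ |t|) :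
    Real.cosh t ≤ Real.exp (κ * t ^ 2 / 2) := by
  have hcosh : Real.cosh t ≤ Real.exp |t| := by
    rw [← Real.cosh_abs, Real.cosh_eq]
    linarith [Real.exp_le_exp.2 (show -|t| ≤ |t| by linarith [abs_nonneg t])]
  refine hcosh.trans (Real.exp_le_exp.2 ?_)
  rw [div_le_iff₀ hκ] at ht
  rw [← sq_abs]
  nlinarith [abs_nonneg t]

lemma exists_sparse_cosh_le {κ : ℝ} (hκ : 0 < κ) :
    ∃ ρ₀ : ℝ, 0 < ρ₀ ∧ ∀ ρ, 0 ≤ ρ → ρ ≤ ρ₀ → ρ ≤ 1 → ∀ t : ℝ,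
      1 - ρ + ρ * Real.cosh t ≤ Real.exp (κ * t ^ 2 / 2) := by
  refine ⟨κ / Real.exp ((2 / κ) ^ 2 / 2), by positivity, fun ρ h0 hρ h1 t => ?_⟩
  rcases le_total |t| (2 / κ) with ht | ht
  · exact sparse_cosh_le_of_abs_le h0 ht ((le_div_iff₀ (Real.exp_pos _)).1 hρ)
  · refine le_trans ?_ (cosh_le_of_le_abs hκ ht)
    nlinarith [Real.one_le_cosh t]

/-- The probability `1/2`, as a point of the unit interval. -/
noncomputable def half : I := ⟨1 / 2, by norm_num, by norm_num⟩

lemma coe_half : (half : ℝ) = 1 / 2 := rfl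

/-- The inverse-probability weight of an entry: `0` if the bit `x` marks it as corrupted, and `q⁻¹`
if it is observed, which happens with probability `q`, so that the mean is `1`. -/
noncomputable def invWeight (q : ℝ) (x : Bool) : ℝ := if x then 0 else q⁻¹

lemma mgf_invWeight_sub_one_le {q : I} (hq : 0 < (q : ℝ)) {t : ℝ} (ht : |t / q| ≤ 1) :
    mgf (fun x => invWeight q x - 1) (bernoulliMeasure true false (σ q)) t ≤
      Real.exp (t ^ 2 / q) := by
  have hexp := (abs_le.1 (Real.abs_exp_sub_one_sub_id_le ht)).2
  have hle : q * (Real.exp (t / q) - 1) ≤ t + t ^ 2 / q := by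
    rw [show t + t ^ 2 / q = q * (t / q + (t / q) ^ 2) by field_simp]
    exact mul_le_mul_of_nonneg_left (by linarith) hq.le
  have hsplit : Real.exp (t * ((q : ℝ)⁻¹ - 1)) = Real.exp (t / q) * Real.exp (-t) := by
    rw [← Real.exp_add]; congr 1; ring
  calc mgf _ _ t = (1 + q * (Real.exp (t / q) - 1)) * Real.exp (-t) := by
        simp only [mgf, invWeight, integral_bernoulliMeasure, coe_symm_eq, smul_eq_mul, if_true,
          Bool.false_eq_true, if_false, hsplit, zero_sub, mul_neg, mul_one]
        ring
    _ ≤ Real.exp (t + t ^ 2 / q) * Real.exp (-t) := by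
        gcongr
        linarith [Real.add_one_le_exp (q * (Real.exp (t / q) - 1)), Real.exp_le_exp.2 hle]
    _ = Real.exp (t ^ 2 / q) := by rw [← Real.exp_add]; congr 1; ring

lemma hasSubgaussianMGF_invWeight_sub_one {q : I} (hq : 0 < (q : ℝ)) :
    HasSubgaussianMGF (fun x => invWeight q x - 1)
      ((Real.toNNReal q)⁻¹ ^ 2) (bernoulliMeasure true false (σ q)) := by
  have hmean : ∫ x, invWeight q x ∂bernoulliMeasure true false (σ q) = 1 := by
    simp [invWeight, integral_bernoulliMeasure, hq.ne']
  have h := hasSubgaussianMGF_of_mem_Icc (μ := bernoulliMeasure true false (σ q))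
    (X := invWeight q) (a := 0) (b := (q : ℝ)⁻¹)
    Measurable.of_discrete.aemeasurable (.of_forall fun x => by cases x <;> simp [invWeight, hq.le])
  rw [hmean] at h
  refine hasSubgaussianMGF_mono h ?_
  rw [← NNReal.coe_le_coe]
  push_cast
  rw [Real.coe_toNNReal _ hq.le, sub_zero, Real.norm_of_nonneg (by positivity)]
  gcongr
  exact half_le_self (by positivity)

/-- The value `±1` of a sign bit. -/
def sgn (x : Bool) : ℝ := if x then 1 else -1

lemma hasSubgaussianMGF_sgn : HasSubgaussianMGF sgn 1 (bernoulliMeasure true false half) where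
  integrable_exp_mul _ := Integrable.of_finite
  mgf_le t := by
    refine le_of_eq_of_le ?_ ((Real.cosh_le_exp_half_sq t).trans_eq (by simp))
    simp only [mgf, integral_bernoulliMeasure, coe_half, smul_eq_mul, sgn, Real.cosh_eq, if_true,
      Bool.false_eq_true, if_false, mul_one, mul_neg]
    ring

lemma exists_hasSubgaussianMGF_sparse_sgn {κ : NNReal} (hκ : 0 < κ) :
    ∃ ρ₀ : ℝ, 0 < ρ₀ ∧ ∀ ρ : I, ρ ≤ ρ₀ →
      HasSubgaussianMGF (fun x : Bool × Bool => if x.1 then sgn x.2 else 0) κ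
        ((bernoulliMeasure true false ρ).prod (bernoulliMeasure true false half)) := by
  obtain ⟨ρ₀, hρ₀, h⟩ := exists_sparse_cosh_le (κ := κ) (by exact_mod_cast hκ)
  refine ⟨ρ₀, hρ₀, fun ρ hρ => ⟨fun _ => Integrable.of_finite, fun t => ?_⟩⟩
  rw [mgf, integral_prod _ (Integrable.of_finite)]
  refine le_of_eq_of_le ?_ (h ρ ρ.2.1 hρ ρ.2.2 t)
  simp only [integral_bernoulliMeasure, coe_half, smul_eq_mul, sgn, Real.cosh_eq, if_true,
    Bool.false_eq_true, if_false, mul_zero, Real.exp_zero, mul_one, mul_neg]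
  ring

end Bernoulli

/-! ### Random coordinate restrictions of a projection -/

section Moments

lemma pow_sub_pow_eq_sum {R : Type*} [Ring R] (X Y : R) (n : ℕ) :
    X ^ n - Y ^ n = ∑ q ∈ Finset.range n, X ^ q * (X - Y) * Y ^ (n - 1 - q) := by
  induction n with
  | zero => simp
  | succ n ih =>
    have hsum : ∑ q ∈ Finset.range n, X ^ q * (X - Y) * Y ^ (n - q) = (X ^ n - Y ^ n) * Y := by
      rw [ih, Finset.sum_mul]
      refine Finset.sum_congr rfl fun q hq => ?_
      rw [show n - q = n - 1 - q + 1 by have := Finset.mem_range.1 hq; omega, pow_succ,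
        ← mul_assoc]
    rw [Finset.sum_range_succ, Nat.add_sub_cancel, hsum, Nat.sub_self, pow_zero, pow_succ,
      pow_succ]
    noncomm_ring

lemma coordProj_sub_smul_one {ι : Type*} [DecidableEq ι] (b : ι → Bool) (p : ℝ) :
    coordProj b - p • 1 = diagonal fun e => (if b e then 1 else 0) - p := by
  rw [coordProj, smul_one_eq_diagonal, diagonal_sub]

variable {ι : Type*} [Fintype ι] [DecidableEq ι]

/-- The compression `G (P_b - p) G` of the centred random coordinate projection to the range
of `G`. -/
noncomputable def compr (G : Matrix ι ι ℝ) (p : ℝ) (b : ι → Bool) : Matrix ι ι ℝ :=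
  G * (coordProj b - p • 1) * G

variable {G : Matrix ι ι ℝ} {p : ℝ}

lemma isHermitian_compr (hG : IsStarProjection G) (b : ι → Bool) :
    (compr G p b).IsHermitian := by
  rw [IsHermitian, conjTranspose_eq_transpose_of_trivial, compr, coordProj_sub_smul_one,
    transpose_mul, transpose_mul, diagonal_transpose, proj_transpose hG, Matrix.mul_assoc]

lemma proj_mul_compr_pow_mul_apply_nonneg (hG : IsStarProjection G) (b : ι → Bool) (m : ℕ)
    (e : ι) : 0 ≤ (G * compr G p b ^ (2 * m) * G) e e := by
  rw [proj_mul_mul_apply_self hG]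
  exact quadForm_even_pow_nonneg (isHermitian_compr hG b) _ m

lemma trace_compr_pow_succ (hG : IsStarProjection G) (n : ℕ) (b : ι → Bool) :
    (G * compr G p b ^ (n + 1) * G).trace =
      ∑ e, ((if b e then 1 else 0) - p) * (G * compr G p b ^ n * G) e e := by
  have hGG := hG.isIdempotentElem.eq
  set D : Matrix ι ι ℝ := coordProj b - p • 1 with hD
  have hfactor : G * compr G p b ^ (n + 1) * G = G * (D * (G * compr G p b ^ n * G)) :=
    calc G * compr G p b ^ (n + 1) * G = (G * G) * (D * (G * compr G p b ^ n * G)) := by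
          rw [pow_succ']
          simp only [compr, D, Matrix.mul_assoc]
      _ = _ := by rw [hGG]
  rw [hfactor, trace_mul_comm, Matrix.mul_assoc, Matrix.mul_assoc _ G G, hGG, trace]
  exact Finset.sum_congr rfl fun e _ => by
    rw [diag_apply, hD, coordProj_sub_smul_one, diagonal_mul]

lemma trace_proj_mul_compr_pow_mul_proj (hG : IsStarProjection G) {n : ℕ} (hn : n ≠ 0)
    (b : ι → Bool) : (G * compr G p b ^ n * G).trace = (compr G p b ^ n).trace := by
  obtain ⟨k, rfl⟩ := Nat.exists_eq_succ_of_ne_zero hn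
  have hXG : compr G p b * G = compr G p b := by
    rw [compr, Matrix.mul_assoc, hG.isIdempotentElem.eq]
  rw [Matrix.mul_assoc, trace_mul_comm, Matrix.mul_assoc, hG.isIdempotentElem.eq, pow_succ,
    Matrix.mul_assoc, hXG]

lemma compr_update_sub (b : ι → Bool) (e : ι) :
    compr G p (Function.update b e true) - compr G p (Function.update b e false) =
      G * single e e 1 * G := by
  rw [compr, compr, ← Matrix.sub_mul, ← Matrix.mul_sub, sub_sub_sub_cancel_right, coordProj,
    coordProj, diagonal_sub, ← diagonal_single]
  congr 3
  funext i
  rcases eq_or_ne i e with rfl | hi <;> simp [*]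

/-- Switching on one coordinate is a rank-one change, so the increment splits into products of
diagonal entries. -/
lemma compr_pow_update_sub (n : ℕ) (b : ι → Bool) (e : ι) :
    (G * compr G p (Function.update b e true) ^ n * G) e e -
      (G * compr G p (Function.update b e false) ^ n * G) e e =
    ∑ q ∈ Finset.range n, (G * compr G p (Function.update b e true) ^ q * G) e e *
      (G * compr G p (Function.update b e false) ^ (n - 1 - q) * G) e e := by
  rw [← Matrix.sub_apply, ← Matrix.sub_mul, ← Matrix.mul_sub, pow_sub_pow_eq_sum,
    compr_update_sub, Finset.mul_sum, Finset.sum_mul, Matrix.sum_apply]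
  refine Finset.sum_congr rfl fun q _ => ?_
  set X := compr G p (Function.update b e true) ^ q
  set Y := compr G p (Function.update b e false) ^ (n - 1 - q)
  have hassoc : G * (X * (G * single e e 1 * G) * Y) * G =
      (G * X * G) * (single e e 1 * (G * Y * G)) := by
    simp only [Matrix.mul_assoc]
  rw [hassoc, Matrix.mul_apply, Finset.sum_eq_single e (fun j _ hj => by
    rw [single_mul_apply_of_ne _ _ _ _ _ hj, mul_zero]) (fun h => (h (Finset.mem_univ e)).elim)]
  simp

lemma compr_pow_update_sub_le (hG : IsStarProjection G) {μ₀ : ℝ} (hμ : ∀ e, G e e ≤ μ₀)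
    (m : ℕ) (b : ι → Bool) (e : ι) :
    (G * compr G p (Function.update b e true) ^ (2 * m + 1) * G) e e -
      (G * compr G p (Function.update b e false) ^ (2 * m + 1) * G) e e ≤
    (2 * m + 1) * μ₀ * ((G * compr G p (Function.update b e true) ^ (2 * m) * G) e e +
      (G * compr G p (Function.update b e false) ^ (2 * m) * G) e e) := by
  rw [compr_pow_update_sub, Nat.add_sub_cancel, mul_assoc]
  refine (Finset.sum_le_card_nsmul _ _
    (μ₀ * ((G * compr G p (Function.update b e true) ^ (2 * m) * G) e e +
      (G * compr G p (Function.update b e false) ^ (2 * m) * G) e e)) fun q hq => ?_).trans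
    (le_of_eq (by simp))
  simp only [proj_mul_mul_apply_self hG]
  refine (quadForm_pow_mul_le (isHermitian_compr hG _) (isHermitian_compr hG _) (G e)
    (even_two_mul m) (Nat.lt_succ_iff.1 (Finset.mem_range.1 hq))).trans ?_
  rw [proj_row_dotProduct_self hG]
  exact mul_le_mul_of_nonneg_right (hμ e)
    (add_nonneg (quadForm_even_pow_nonneg (isHermitian_compr hG _) _ m)
      (quadForm_even_pow_nonneg (isHermitian_compr hG _) _ m))

lemma integral_trace_compr_pow_succ_le (hG : IsStarProjection G) (p : I) {μ₀ : ℝ}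
    (hμ : ∀ e, G e e ≤ μ₀) (m : ℕ) :
    ∫ b, (G * compr G p b ^ (2 * (m + 1)) * G).trace ∂bernoulliPi ι p ≤
      (2 * m + 1) * μ₀ * ∫ b, (G * compr G p b ^ (2 * m) * G).trace ∂bernoulliPi ι p := by
  simp only [show 2 * (m + 1) = 2 * m + 1 + 1 by ring, trace_compr_pow_succ hG]
  simp only [trace, diag_apply]
  rw [integral_finsetSum _ fun _ _ => .of_finite, integral_finsetSum _ fun _ _ => .of_finite,
    Finset.mul_sum]
  refine Finset.sum_le_sum fun e _ => ?_
  rw [integral_bernoulliPi_update p e,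
    integral_bernoulliPi_update p e fun b => (G * compr G p b ^ (2 * m) * G) e e,
    ← integral_const_mul]
  refine integral_mono .of_finite .of_finite fun b => ?_
  have hp0 : (0 : ℝ) ≤ p := p.2.1
  have hp1 : (0 : ℝ) ≤ 1 - p := sub_nonneg.2 p.2.2
  have hstep := compr_pow_update_sub_le (p := p) hG hμ m b e
  have hα0 := proj_mul_compr_pow_mul_apply_nonneg (p := p) hG (Function.update b e true) m e
  have hβ0 := proj_mul_compr_pow_mul_apply_nonneg (p := p) hG (Function.update b e false) m e
  have hμ0 : 0 ≤ (2 * (m : ℝ) + 1) * μ₀ :=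
    mul_nonneg (by positivity) ((proj_diag_nonneg hG e).trans (hμ e))
  simp only [Function.update_self, if_true, Bool.false_eq_true, if_false]
  set α := (G * compr G p (Function.update b e true) ^ (2 * m) * G) e e
  set β := (G * compr G p (Function.update b e false) ^ (2 * m) * G) e e
  have hmix : (p : ℝ) * (1 - p) * (α + β) ≤ p * α + (1 - p) * β := by
    nlinarith [mul_nonneg hp0 (mul_nonneg hp0 hα0), mul_nonneg hp1 (mul_nonneg hp1 hβ0)]
  linarith [mul_le_mul_of_nonneg_left hstep (mul_nonneg hp0 hp1),
    mul_le_mul_of_nonneg_left hmix hμ0]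

lemma integral_trace_compr_pow_le (hG : IsStarProjection G) (p : I) {μ₀ : ℝ} (hμ0 : 0 ≤ μ₀)
    (hμ : ∀ e, G e e ≤ μ₀) (hμ1 : μ₀ ≤ 1) {K m : ℕ} (hm : m ≤ K) :
    ∫ b, (G * compr G p b ^ (2 * m) * G).trace ∂bernoulliPi ι p ≤
      (2 * K * μ₀) ^ m * Fintype.card ι := by
  induction m with
  | zero =>
    simp only [mul_zero, pow_zero, Matrix.mul_one, hG.isIdempotentElem.eq, one_mul, trace,
      diag_apply, integral_const, probReal_univ, one_smul]
    exact (Finset.sum_le_sum fun e _ => (hμ e).trans hμ1).trans (le_of_eq (by simp))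
  | succ m ih =>
    have hmK : (m : ℝ) + 1 ≤ K := by exact_mod_cast hm
    calc ∫ b, (G * compr G p b ^ (2 * (m + 1)) * G).trace ∂bernoulliPi ι p
        ≤ (2 * m + 1) * μ₀ * ((2 * K * μ₀) ^ m * Fintype.card ι) :=
          (integral_trace_compr_pow_succ_le hG p hμ m).trans
            (mul_le_mul_of_nonneg_left (ih (by omega)) (by positivity))
      _ ≤ (2 * K * μ₀) * ((2 * K * μ₀) ^ m * Fintype.card ι) := by
          gcongr
          linarith
      _ = (2 * K * μ₀) ^ (m + 1) * Fintype.card ι := by ring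

lemma norm_coordProj_mul_sq_le (hG : IsStarProjection G) (hp : 0 ≤ p) (b : ι → Bool) :
    ‖coordProj b * G‖ ^ 2 ≤ ‖compr G p b‖ + p := by
  have hstar : star (coordProj b * G) * (coordProj b * G) = compr G p b + p • G := by
    rw [star_mul, hG.isSelfAdjoint.star_eq, (isStarProjection_coordProj b).isSelfAdjoint.star_eq,
      compr, Matrix.mul_sub, Matrix.sub_mul, mul_smul_comm, Matrix.mul_one, smul_mul_assoc,
      hG.isIdempotentElem.eq, sub_add_cancel, Matrix.mul_assoc, ← Matrix.mul_assoc (coordProj b),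
      (isStarProjection_coordProj b).isIdempotentElem.eq, ← Matrix.mul_assoc]
  calc ‖coordProj b * G‖ ^ 2 = ‖compr G p b + p • G‖ := by
        rw [sq, ← CStarRing.norm_star_mul_self, hstar]
    _ ≤ ‖compr G p b‖ + p * ‖G‖ := by
        refine (norm_add_le _ _).trans_eq ?_
        rw [norm_smul, Real.norm_of_nonneg hp]
    _ ≤ ‖compr G p b‖ + p := by
        gcongr
        exact mul_le_of_le_one_right hp hG.norm_le

lemma measureReal_lt_norm_coordProj_mul_sq_le (hG : IsStarProjection G) (p : I) {μ₀ : ℝ}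
    (hμ0 : 0 ≤ μ₀) (hμ : ∀ e, G e e ≤ μ₀) (hμ1 : μ₀ ≤ 1) {s : ℝ} (hs : 0 < s) {m : ℕ}
    (hm : m ≠ 0) :
    (bernoulliPi ι p).real {b | s + p < ‖coordProj b * G‖ ^ 2} ≤
      (2 * m * μ₀ / s ^ 2) ^ m * Fintype.card ι := by
  have hm2 : 2 * m ≠ 0 := by omega
  have hmarkov := mul_meas_ge_le_integral_of_nonneg (μ := bernoulliPi ι p)
    (f := fun b => (compr G p b ^ (2 * m)).trace)
    (ae_of_all _ fun b => (by positivity : 0 ≤ ‖compr G p b‖ ^ (2 * m)).trans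
      (norm_pow_le_trace_pow (isHermitian_compr hG b) hm)) .of_finite (s ^ (2 * m))
  have hmoment := integral_trace_compr_pow_le hG p hμ0 hμ hμ1 (le_refl m)
  simp only [trace_proj_mul_compr_pow_mul_proj hG hm2] at hmoment
  have hsub : (bernoulliPi ι p).real {b | s + p < ‖coordProj b * G‖ ^ 2} ≤
      (bernoulliPi ι p).real {b | s ^ (2 * m) ≤ (compr G p b ^ (2 * m)).trace} :=
    measureReal_mono fun b (hb : s + p < ‖coordProj b * G‖ ^ 2) =>
      (pow_le_pow_left₀ hs.le (by linarith [norm_coordProj_mul_sq_le hG p.2.1 b]) _).trans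
        (norm_pow_le_trace_pow (isHermitian_compr hG b) hm)
  refine hsub.trans ((le_div_iff₀' (by positivity)).2 (hmarkov.trans hmoment)|>.trans_eq ?_)
  rw [div_pow, ← pow_mul]
  ring

end Moments

/-! ### Spectral norms of sub-Gaussian matrices -/

section Nets

lemma exists_norm_sub_le_half {E : Type*} [SeminormedAddCommGroup E] {N : Set E}
    (hN : Metric.IsCover (1 / 2) (Metric.closedBall (0 : E) 1) N) {x : E} (hx : ‖x‖ ≤ 1) :
    ∃ y ∈ N, ‖x - y‖ ≤ 1 / 2 := by
  obtain ⟨y, hy, hxy⟩ := hN (mem_closedBall_zero_iff.2 hx)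
  have hxy' : edist x y ≤ ((1 / 2 : NNReal) : ENNReal) := hxy
  rw [edist_nndist, ENNReal.coe_le_coe, ← NNReal.coe_le_coe, coe_nndist, dist_eq_norm] at hxy'
  exact ⟨y, hy, by simpa using hxy'⟩

section NormedSpace

variable {E : Type*} [NormedAddCommGroup E] [NormedSpace ℝ E]

lemma card_le_of_isSeparated_half [FiniteDimensional ℝ E] {N : Finset E} (hN : ∀ x ∈ N, ‖x‖ ≤ 1)
    (hsep : Metric.IsSeparated (1 / 2 : NNReal) (N : Set E)) :
    N.card ≤ 5 ^ Module.finrank ℝ E := by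
  classical
  rw [← Finset.card_image_of_injective N (smul_right_injective E (two_ne_zero (α := ℝ)))]
  refine Besicovitch.card_le_of_separated _ (Finset.forall_mem_image.2 fun x hx => ?_)
    (Finset.forall_mem_image.2 fun x hx => Finset.forall_mem_image.2 fun y hy hxy => ?_)
  · rw [norm_smul, Real.norm_ofNat]
    linarith [hN x hx]
  · have hdist : ((1 / 2 : NNReal) : ENNReal) < edist x y := hsep hx hy fun h => hxy (h ▸ rfl)
    rw [edist_nndist, ENNReal.coe_lt_coe, ← NNReal.coe_lt_coe, coe_nndist, dist_eq_norm] at hdist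
    push_cast at hdist
    rw [← smul_sub, norm_smul, Real.norm_ofNat]
    linarith

lemma packingNumber_half_closedBall_le [FiniteDimensional ℝ E] :
    Metric.packingNumber (1 / 2) (Metric.closedBall (0 : E) 1) ≤
      (5 ^ Module.finrank ℝ E : ℕ) := by
  refine iSup₂_le fun C hC => iSup_le fun hCsep => ?_
  by_contra! hlt
  obtain ⟨N, hNC, hN⟩ := Set.exists_subset_encard_eq (Order.add_one_le_of_lt hlt)
  lift N to Finset E using Set.finite_of_encard_eq_coe (k := 5 ^ Module.finrank ℝ E + 1) hN
  have hcard := card_le_of_isSeparated_half (fun x hx => by simpa using hC (hNC hx))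
    (hCsep.subset hNC)
  rw [Set.encard_coe_eq_coe_finsetCard] at hN
  have hN' : N.card = 5 ^ Module.finrank ℝ E + 1 := by exact_mod_cast hN
  omega

lemma exists_isCover_half_closedBall (E : Type*) [NormedAddCommGroup E] [NormedSpace ℝ E]
    [FiniteDimensional ℝ E] : ∃ N : Finset E, N.card ≤ 5 ^ Module.finrank ℝ E ∧
      (∀ x ∈ N, ‖x‖ ≤ 1) ∧ Metric.IsCover (1 / 2) (Metric.closedBall (0 : E) 1) (N : Set E) := by
  have hpack := packingNumber_half_closedBall_le (E := E)
  have hfin : Metric.packingNumber (1 / 2) (Metric.closedBall (0 : E) 1) ≠ ⊤ :=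
    (hpack.trans_lt (ENat.natCast_lt_top _)).ne
  have hcard := Metric.encard_maximalSeparatedSet hfin
  have hcover := Metric.isCover_maximalSeparatedSet hfin
  have hsub := Metric.maximalSeparatedSet_subset (ε := 1 / 2) (A := Metric.closedBall (0 : E) 1)
  generalize Metric.maximalSeparatedSet (1 / 2) (Metric.closedBall (0 : E) 1) = N at *
  lift N to Finset E using Set.encard_ne_top_iff.1 (hcard.trans_ne hfin)
  rw [Set.encard_coe_eq_coe_finsetCard] at hcard
  exact ⟨N, by exact_mod_cast hcard.trans_le hpack, fun x hx => by simpa using hsub hx, hcover⟩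

end NormedSpace

section InnerProductSpace

variable {E F : Type*} [NormedAddCommGroup E] [InnerProductSpace ℝ E]
  [NormedAddCommGroup F] [InnerProductSpace ℝ F]

lemma norm_le_two_mul_of_isCover {N : Set F}
    (hN : Metric.IsCover (1 / 2) (Metric.closedBall (0 : F) 1) N) {v : F} {τ : ℝ}
    (hv : ∀ x ∈ N, inner ℝ x v ≤ τ) : ‖v‖ ≤ 2 * τ := by
  have hunit : inner ℝ (‖v‖⁻¹ • v) v = ‖v‖ := by
    rw [real_inner_smul_left, real_inner_self_eq_norm_sq, sq, ← mul_assoc,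
      inv_mul_mul_self]
  have hle : ‖‖v‖⁻¹ • v‖ ≤ 1 := by
    rw [norm_smul, norm_inv, norm_norm]
    exact inv_mul_le_one
  obtain ⟨x, hx, hdist⟩ := exists_norm_sub_le_half hN hle
  have herr : inner ℝ (‖v‖⁻¹ • v - x) v ≤ 1 / 2 * ‖v‖ :=
    (real_inner_le_norm _ _).trans (mul_le_mul_of_nonneg_right hdist (norm_nonneg v))
  rw [inner_sub_left, hunit] at herr
  linarith [hv x hx]

lemma opNorm_le_four_mul_of_isCover {N₁ : Set F} {N₂ : Set E}
    (h₁ : Metric.IsCover (1 / 2) (Metric.closedBall (0 : F) 1) N₁)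
    (h₂ : Metric.IsCover (1 / 2) (Metric.closedBall (0 : E) 1) N₂) {T : E →L[ℝ] F} {τ : ℝ}
    (hT : ∀ x ∈ N₁, ∀ y ∈ N₂, inner ℝ x (T y) ≤ τ) : ‖T‖ ≤ 4 * τ := by
  have hnet : ∀ y ∈ N₂, ‖T y‖ ≤ 2 * τ := fun y hy =>
    norm_le_two_mul_of_isCover h₁ fun x hx => hT x hx y hy
  have hτ : 0 ≤ 2 * τ := by
    obtain ⟨y, hy, -⟩ := exists_norm_sub_le_half h₂ (x := 0) (by simp)
    exact (norm_nonneg _).trans (hnet y hy)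
  have hop : ‖T‖ ≤ 2 * τ + 1 / 2 * ‖T‖ := by
    refine T.opNorm_le_of_unit_norm (by positivity) fun y hy => ?_
    obtain ⟨y₀, hy₀, hdist⟩ := exists_norm_sub_le_half h₂ hy.le
    calc ‖T y‖ = ‖T y₀ + T (y - y₀)‖ := by rw [← map_add, add_sub_cancel]
      _ ≤ ‖T y₀‖ + ‖T‖ * ‖y - y₀‖ := norm_add_le_of_le le_rfl (T.le_opNorm _)
      _ ≤ 2 * τ + ‖T‖ * (1 / 2) := by gcongr; exact hnet y₀ hy₀
      _ = 2 * τ + 1 / 2 * ‖T‖ := by ring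
  linarith

end InnerProductSpace

lemma twentyFive_pow_le_exp (n : ℕ) : (25 : ℝ) ^ n ≤ Real.exp (4 * n) := by
  have hexp : (25 : ℝ) ≤ Real.exp 4 :=
    calc (25 : ℝ) ≤ 2.7 ^ 4 := by norm_num
      _ ≤ Real.exp 1 ^ 4 := by
        gcongr
        linarith [Real.exp_one_gt_d9]
      _ = Real.exp 4 := by rw [← Real.exp_nat_mul]; norm_num
  rw [mul_comm, Real.exp_nat_mul]
  gcongr

variable {Ω m n : Type*} [MeasurableSpace Ω] {μ : Measure Ω} [Fintype m] [Fintype n]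
  [DecidableEq n]

lemma norm_le_four_mul_of_isCover {N₁ : Set (EuclideanSpace ℝ m)} {N₂ : Set (EuclideanSpace ℝ n)}
    (h₁ : Metric.IsCover (1 / 2) (Metric.closedBall 0 1) N₁)
    (h₂ : Metric.IsCover (1 / 2) (Metric.closedBall 0 1) N₂) {A : Matrix m n ℝ} {τ : ℝ}
    (hA : ∀ x ∈ N₁, ∀ y ∈ N₂, x.ofLp ⬝ᵥ (A *ᵥ y.ofLp) ≤ τ) : ‖A‖ ≤ 4 * τ := by
  rw [l2_opNorm_def]
  refine opNorm_le_four_mul_of_isCover h₁ h₂ fun x hx y hy => ?_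
  exact (inner_toLp x.ofLp (A *ᵥ y.ofLp)).trans_le (hA x hx y hy)

lemma measureReal_lt_norm_le [IsFiniteMeasure μ] (hmn : Fintype.card n ≤ Fintype.card m)
    {κ : NNReal} (hκ : 0 < κ) {A : Ω → Matrix m n ℝ}
    (hA : ∀ x y, l2norm x ≤ 1 → l2norm y ≤ 1 →
      HasSubgaussianMGF (fun ω => x ⬝ᵥ (A ω *ᵥ y)) (κ ^ 2) μ) :
    μ.real {ω | 16 * (κ * √(Fintype.card m)) < ‖A ω‖} ≤ Real.exp (-4 * Fintype.card m) := by
  obtain ⟨N₁, hcard₁, hball₁, hcover₁⟩ := exists_isCover_half_closedBall (EuclideanSpace ℝ m)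
  obtain ⟨N₂, hcard₂, hball₂, hcover₂⟩ := exists_isCover_half_closedBall (EuclideanSpace ℝ n)
  rw [finrank_euclideanSpace] at hcard₁ hcard₂
  set τ : ℝ := 4 * (κ * √(Fintype.card m)) with hτ
  have hsub : {ω | 16 * (κ * √(Fintype.card m)) < ‖A ω‖} ⊆
      {ω | ∃ z : N₁ × N₂, τ ≤ z.1.1.ofLp ⬝ᵥ (A ω *ᵥ z.2.1.ofLp)} := by
    intro ω (hω : 16 * (κ * √(Fintype.card m)) < ‖A ω‖)
    by_contra hcon
    simp only [Set.mem_ofPred_eq, not_exists, not_le] at hcon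
    have hnet := norm_le_four_mul_of_isCover hcover₁ hcover₂ fun x hx y hy =>
      (hcon (⟨x, hx⟩, ⟨y, hy⟩)).le
    linarith
  have hpoint : ∀ z : N₁ × N₂,
      μ.real {ω | τ ≤ z.1.1.ofLp ⬝ᵥ (A ω *ᵥ z.2.1.ofLp)} ≤ Real.exp (-8 * Fintype.card m) := by
    intro z
    refine ((hA z.1.1.ofLp z.2.1.ofLp (hball₁ _ z.1.2) (hball₂ _ z.2.2)).measure_ge_le
      (by positivity)).trans_eq (congrArg Real.exp ?_)
    rw [hτ, mul_pow, mul_pow, Real.sq_sqrt (Nat.cast_nonneg _)]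
    push_cast
    field_simp
    ring
  have hcard : (Fintype.card (N₁ × N₂) : ℝ) ≤ Real.exp (4 * Fintype.card m) := by
    refine le_trans ?_ (twentyFive_pow_le_exp _)
    rw [Fintype.card_prod, Fintype.card_coe, Fintype.card_coe, show (25 : ℝ) = 5 * 5 by norm_num,
      mul_pow]
    exact_mod_cast Nat.mul_le_mul hcard₁ (hcard₂.trans (Nat.pow_le_pow_right (by norm_num) hmn))
  calc μ.real {ω | 16 * (κ * √(Fintype.card m)) < ‖A ω‖}
      ≤ Fintype.card (N₁ × N₂) * Real.exp (-8 * Fintype.card m) :=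
        (measureReal_mono hsub).trans (measureReal_exists_le _ hpoint)
    _ ≤ Real.exp (4 * Fintype.card m) * Real.exp (-8 * Fintype.card m) := by gcongr
    _ = Real.exp (-4 * Fintype.card m) := by
        rw [← Real.exp_add]
        ring_nf

lemma measureReal_lt_norm_toMat_mulVec_le {ι : Type*} [Fintype ι] [DecidableEq ι]
    [IsProbabilityMeasure μ] (hmn : Fintype.card n ≤ Fintype.card m)
    {X : Ω → ℝ} {κ B : NNReal} (hX : HasSubgaussianMGF X (κ ^ 2) μ) (hκ : 0 < κ) (hB : 0 < B)
    {C : Matrix (m × n) ι ℝ} (hC : ‖C‖ ≤ B) :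
    (Measure.pi fun _ : ι => μ).real
        {ω | 16 * (B * κ * √(Fintype.card m)) < ‖toMat (C *ᵥ fun e => X (ω e))‖} ≤
      Real.exp (-4 * Fintype.card m) := by
  classical
  have hmain := measureReal_lt_norm_le (μ := Measure.pi fun _ : ι => μ) hmn (mul_pos hB hκ)
    (A := fun ω => toMat (C *ᵥ fun e => X (ω e))) fun x y hx hy => ?_
  · simpa only [NNReal.coe_mul] using hmain
  simp only [dotProduct_toMat_mulVec]
  simp only [dotProduct_mulVec, ← mulVec_transpose]
  rw [mul_pow]
  refine hasSubgaussianMGF_sum_pi hX ?_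
  have hcoef : l2norm (Cᵀ *ᵥ fun p : m × n => x p.1 * y p.2) ≤ B := by
    refine (l2norm_mulVec_le _ _).trans ?_
    rw [l2norm_mul_prod, ← conjTranspose_eq_transpose_of_trivial, l2_opNorm_conjTranspose]
    exact (mul_le_of_le_one_right (norm_nonneg _)
      (mul_le_one₀ hx (l2norm_nonneg y) hy)).trans hC
  rw [← l2norm_sq]
  push_cast
  exact pow_le_pow_left₀ (l2norm_nonneg _) hcoef 2

end Nets

/-! ### The golfing scheme -/

section Golfing

/-- The batch of the golfing scheme: the entries of `Z` that are not corrupted by `b`, rescaled so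
that the batch has mean `Z` when entries survive with probability `q`. -/
noncomputable def batch {ι : Type*} (q : ℝ) (Z : ι → ℝ) (b : ι → Bool) (e : ι) : ℝ :=
  Z e * invWeight q (b e)

lemma batch_sub {ι : Type*} (q : ℝ) (Z : ι → ℝ) (b : ι → Bool) :
    batch q Z b - Z = fun e => Z e * (invWeight q (b e) - 1) := by
  ext e
  simp only [Pi.sub_apply, batch, mul_sub, mul_one]

lemma abs_batch_le {ι : Type*} {q M : ℝ} (hq : 0 < q) {Z : ι → ℝ} (hZM : ∀ e, |Z e| ≤ M)
    (b : ι → Bool) (e : ι) : |batch q Z b e| ≤ M / q := by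
  have hM : 0 ≤ M := (abs_nonneg _).trans (hZM e)
  rw [batch, abs_mul, div_eq_mul_inv]
  refine mul_le_mul (hZM e) ?_ (abs_nonneg _) hM
  rw [invWeight]
  split_ifs
  · simp [hq.le]
  · rw [abs_of_pos (inv_pos.2 hq)]

section Entrywise

variable {ι : Type*} [Fintype ι] {G : Matrix ι ι ℝ} {q : I}

lemma mgf_sum_invWeight_sub_one_le (hq : 0 < (q : ℝ)) {c : ι → ℝ} {t : ℝ}
    (ht : ∀ e, |t * c e| ≤ q) :
    mgf (fun b => ∑ e, c e * (invWeight q (b e) - 1)) (bernoulliPi ι (σ q)) t ≤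
      Real.exp (t ^ 2 * (∑ e, c e ^ 2) / q) := by
  have hindep : iIndepFun (fun e (b : ι → Bool) => c e * (invWeight q (b e) - 1))
      (bernoulliPi ι (σ q)) :=
    iIndepFun_pi (X := fun e x => c e * (invWeight q x - 1))
      fun _ => Measurable.of_discrete.aemeasurable
  have hfun : (fun b : ι → Bool => ∑ e, c e * (invWeight q (b e) - 1)) =
      ∑ e, fun b => c e * (invWeight q (b e) - 1) := by
    ext b
    simp only [Finset.sum_apply]
  rw [hfun, hindep.mgf_sum (fun _ => Measurable.of_discrete), Finset.mul_sum, Finset.sum_div,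
    Real.exp_sum]
  refine Finset.prod_le_prod (fun e _ => mgf_nonneg) fun e _ => ?_
  rw [mgf_const_mul, ← mul_pow, mul_comm t]
  refine le_of_eq_of_le ?_ (mgf_invWeight_sub_one_le hq (t := c e * t) ?_)
  · exact integral_comp_eval (μ := fun _ : ι => bernoulliMeasure true false (σ q))
      (f := fun x => Real.exp (c e * t * (invWeight q x - 1)))
      Measurable.of_discrete.aestronglyMeasurable
  · rw [abs_div, abs_of_pos hq, div_le_one hq, mul_comm]
    exact ht e

lemma measureReal_lt_abs_sub_mulVec_batch_le (hG : IsStarProjection G) {μ₀ : ℝ} (hμ0 : 0 < μ₀)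
    (hμ : ∀ e, G e e ≤ μ₀) (hq : 0 < (q : ℝ)) {M : ℝ} (hM : 0 < M) {Z : ι → ℝ}
    (hZ : G *ᵥ Z = Z) (hZM : ∀ e, |Z e| ≤ M) (e : ι) :
    (bernoulliPi ι (σ q)).real {b | M / 2 < |(Z - G *ᵥ batch q Z b) e|} ≤
      2 * Real.exp (-q / (16 * μ₀)) := by
  set s : ℝ := q / (4 * μ₀ * M) with hs
  have hentry : ∀ b, |(Z - G *ᵥ batch q Z b) e| =
      |∑ f, G e f * Z f * (invWeight q (b f) - 1)| := by
    intro b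
    have hres : Z - G *ᵥ batch q Z b = -(G *ᵥ (batch q Z b - Z)) := by
      rw [mulVec_sub, hZ, neg_sub]
    rw [hres, Pi.neg_apply, abs_neg, batch_sub]
    simp only [mulVec, dotProduct, mul_assoc]
  have hcoef : ∀ f, |G e f * Z f| ≤ μ₀ * M := fun f => by
    rw [abs_mul]
    exact mul_le_mul (abs_proj_apply_le hG hμ e f) (hZM f) (abs_nonneg _) hμ0.le
  have hsum : ∑ f, (G e f * Z f) ^ 2 ≤ μ₀ * M ^ 2 := by
    calc ∑ f, (G e f * Z f) ^ 2 ≤ ∑ f, G e f ^ 2 * M ^ 2 := by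
          gcongr with f
          rw [mul_pow, ← sq_abs (Z f)]
          gcongr
          exact hZM f
      _ = G e e * M ^ 2 := by rw [← Finset.sum_mul, sum_proj_row_sq hG]
      _ ≤ μ₀ * M ^ 2 := by gcongr; exact hμ e
  have hmgf : ∀ t : ℝ, |t| = s →
      mgf (fun b => ∑ f, G e f * Z f * (invWeight q (b f) - 1)) (bernoulliPi ι (σ q)) t ≤
        Real.exp (q / (16 * μ₀)) := by
    intro t ht
    refine (mgf_sum_invWeight_sub_one_le hq fun f => ?_).trans (Real.exp_le_exp.2 ?_)
    · rw [abs_mul, ht]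
      refine (mul_le_mul_of_nonneg_left (hcoef f) (by positivity)).trans ?_
      rw [hs, show q / (4 * μ₀ * M) * (μ₀ * M) = (q : ℝ) / 4 by field_simp]
      linarith
    · rw [← sq_abs, ht]
      calc s ^ 2 * (∑ f, (G e f * Z f) ^ 2) / q ≤ s ^ 2 * (μ₀ * M ^ 2) / q := by gcongr
        _ = q / (16 * μ₀) := by rw [hs]; field_simp; norm_num
  simp only [hentry]
  refine (measureReal_lt_abs_le (s := s) (by positivity) (fun _ => Integrable.of_finite)
    (hmgf s (abs_of_pos (by positivity)))
    (hmgf (-s) (by rw [abs_neg, abs_of_pos (by positivity)]))).trans (le_of_eq ?_)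
  congr 2
  rw [hs]
  field_simp
  norm_num

end Entrywise

variable {m n : Type*} [Fintype m] [Fintype n] [DecidableEq n] {G : Matrix (m × n) (m × n) ℝ}

/-- The outcome of `k` successful rounds of the golfing scheme aimed at a target `Z` in the range
of `G` with entries at most `M`: an approximation `Y` of `Z` supported off `{e | b e = true}`. -/
def IsGolfed (G : Matrix (m × n) (m × n) ℝ) (q M : ℝ) (Z : m × n → ℝ) (k : ℕ)
    (b : m × n → Bool) : Prop :=
  ∃ Y : m × n → ℝ, (∀ e, b e = true → Y e = 0) ∧
    (∀ e, |Y e| ≤ 2 * M / q * (1 - (1 / 2) ^ k)) ∧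
    (∀ e, |(Z - G *ᵥ Y) e| ≤ (1 / 2) ^ k * M) ∧
    ‖toMat (Y - G *ᵥ Y)‖ ≤ 32 * (M / q * √(Fintype.card m)) * (1 - (1 / 2) ^ k)

lemma isGolfed_zero {q M : ℝ} {Z : m × n → ℝ} (hZM : ∀ e, |Z e| ≤ M) (b : m × n → Bool) :
    IsGolfed G q M Z 0 b :=
  ⟨0, by simp, by simp, by simpa using hZM, by simp⟩

lemma IsGolfed.succ (hspec : ∀ f, ‖toMat (f - G *ᵥ f)‖ ≤ ‖toMat f‖) {q : ℝ} (hq : 0 < q) {M : ℝ}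
    {Z : m × n → ℝ} (hZ : G *ᵥ Z = Z) (hZM : ∀ e, |Z e| ≤ M) {k : ℕ} {b b' : m × n → Bool}
    (hbatch : ‖toMat (batch q Z b - Z)‖ ≤ 16 * (M / q * √(Fintype.card m)))
    (h : IsGolfed G q (M / 2) (Z - G *ᵥ batch q Z b) k b') :
    IsGolfed G q M Z (k + 1) fun e => b e && b' e := by
  obtain ⟨Y, hsupp, hsup, hres, hnorm⟩ := h
  set W := batch q Z b with hW
  refine ⟨W + Y, fun e he => ?_, fun e => ?_, fun e => ?_, ?_⟩
  · rw [Bool.and_eq_true] at he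
    simp [hW, batch, invWeight, he.1, hsupp e he.2]
  · calc |(W + Y) e| ≤ |W e| + |Y e| := abs_add_le _ _
      _ ≤ M / q + 2 * (M / 2) / q * (1 - (1 / 2) ^ k) :=
        add_le_add (abs_batch_le hq hZM b e) (hsup e)
      _ = 2 * M / q * (1 - (1 / 2) ^ (k + 1)) := by rw [pow_succ]; ring
  · rw [mulVec_add, ← sub_sub]
    refine (hres e).trans_eq ?_
    rw [pow_succ]
    ring
  · have hsplit : W + Y - G *ᵥ (W + Y) = ((W - Z) - G *ᵥ (W - Z)) + (Y - G *ᵥ Y) := by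
      rw [mulVec_sub, hZ, mulVec_add]
      abel
    calc ‖toMat (W + Y - G *ᵥ (W + Y))‖
        ≤ ‖toMat ((W - Z) - G *ᵥ (W - Z))‖ + ‖toMat (Y - G *ᵥ Y)‖ := by
          rw [hsplit, map_add]
          exact norm_add_le _ _
      _ ≤ 16 * (M / q * √(Fintype.card m)) +
            32 * (M / 2 / q * √(Fintype.card m)) * (1 - (1 / 2) ^ k) :=
          add_le_add ((hspec _).trans hbatch) hnorm
      _ = 32 * (M / q * √(Fintype.card m)) * (1 - (1 / 2) ^ (k + 1)) := by rw [pow_succ]; ring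

lemma measureReal_lt_norm_toMat_batch_sub_le (hmn : Fintype.card n ≤ Fintype.card m) {q : I}
    (hq : 0 < (q : ℝ)) {M : ℝ} (hM : 0 < M) {Z : m × n → ℝ} (hZM : ∀ e, |Z e| ≤ M) :
    (bernoulliPi (m × n) (σ q)).real
        {b | 16 * (M / q * √(Fintype.card m)) < ‖toMat (batch q Z b - Z)‖} ≤
      Real.exp (-4 * Fintype.card m) := by
  classical
  have hbatch : ∀ b, batch q Z b - Z = diagonal Z *ᵥ fun e => invWeight q (b e) - 1 := by
    intro b
    rw [batch_sub]
    ext e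
    rw [mulVec_diagonal]
  have hdiag : ‖diagonal Z‖ ≤ M.toNNReal := by
    rw [l2_opNorm_diagonal, Real.coe_toNNReal _ hM.le]
    exact (pi_norm_le_iff_of_nonneg hM.le).2 hZM
  have h := measureReal_lt_norm_toMat_mulVec_le hmn (hasSubgaussianMGF_invWeight_sub_one hq)
    (by simpa using hq) (Real.toNNReal_pos.2 hM) hdiag
  simp only [NNReal.coe_inv, Real.coe_toNNReal _ hq.le, Real.coe_toNNReal _ hM.le,
    ← div_eq_mul_inv] at h
  simpa only [hbatch] using h

lemma measureReal_not_isGolfed_le (hmn : Fintype.card n ≤ Fintype.card m)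
    (hG : IsStarProjection G) {μ₀ : ℝ} (hμ0 : 0 < μ₀) (hμ : ∀ e, G e e ≤ μ₀)
    (hspec : ∀ f, ‖toMat (f - G *ᵥ f)‖ ≤ ‖toMat f‖) {q : I} (hq : 0 < (q : ℝ)) (k : ℕ) {M : ℝ}
    (hM : 0 < M) {Z : m × n → ℝ} (hZ : G *ᵥ Z = Z) (hZM : ∀ e, |Z e| ≤ M) :
    (bernoulliPi (m × n) (σ q ^ k)).real {b | ¬ IsGolfed G q M Z k b} ≤
      k * (Fintype.card (m × n) * (2 * Real.exp (-q / (16 * μ₀))) +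
        Real.exp (-4 * Fintype.card m)) := by
  induction k generalizing M Z with
  | zero => simp [isGolfed_zero hZM]
  | succ k ih =>
    set ε : ℝ := Fintype.card (m × n) * (2 * Real.exp (-q / (16 * μ₀))) +
      Real.exp (-4 * Fintype.card m)
    set bad : Set (m × n → Bool) := {b | ∃ e, M / 2 < |(Z - G *ᵥ batch q Z b) e|} ∪
      {b | 16 * (M / q * √(Fintype.card m)) < ‖toMat (batch q Z b - Z)‖} with hbad
    have hbadp : (bernoulliPi (m × n) (σ q)).real bad ≤ ε :=
      (measureReal_union_le _ _).trans (add_le_add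
        (measureReal_exists_le _ (measureReal_lt_abs_sub_mulVec_batch_le hG hμ0 hμ hq hM hZ hZM))
        (measureReal_lt_norm_toMat_batch_sub_le hmn hq hM hZM))
    have hinner : ∀ b ∉ bad, (bernoulliPi (m × n) (σ q ^ k)).real
        {b' | ¬ IsGolfed G q M Z (k + 1) fun e => b e && b' e} ≤ k * ε := by
      intro b hb
      simp only [hbad, Set.mem_union, Set.mem_ofPred_eq, not_or, not_exists, not_lt] at hb
      have hZ' : G *ᵥ (Z - G *ᵥ batch q Z b) = Z - G *ᵥ batch q Z b := by
        rw [mulVec_sub, proj_mulVec_mulVec hG, hZ]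
      refine le_trans (measureReal_mono ?_) (ih (half_pos hM) hZ' hb.1)
      exact Set.ofPred_subset_ofPred.2 fun b' => mt (IsGolfed.succ hspec hq hZ hZM hb.2)
    have hprod := measureReal_prod_le_add (μ := bernoulliPi (m × n) (σ q))
      (ν := bernoulliPi (m × n) (σ q ^ k))
      (E := {z | ¬ IsGolfed G q M Z (k + 1) fun e => z.1 e && z.2 e}) (t := k * ε)
      (by positivity) hinner
    rw [pow_succ', ← map_and_bernoulliPi, map_measureReal_apply Measurable.of_discrete
      (Set.toFinite _).measurableSet]
    refine hprod.trans ((add_le_add_left hbadp _).trans_eq ?_)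
    push_cast
    ring

end Golfing

/-! ### The least-squares correction of the random signs -/

section LeastSquares

variable {ι : Type*} [Fintype ι] [DecidableEq ι] {G B : Matrix ι ι ℝ} {τ : ℝ}

/-- The matrix sending `s` to the vector of least Euclidean norm in the range of `1 - B` that makes
`B s` orthogonal to the range of `G`. -/
noncomputable def lsCorrection (G B : Matrix ι ι ℝ) : Matrix ι ι ℝ :=
  -((1 - B) * (G * B) * (1 - B * G * B)⁻¹ * B)

lemma proj_mul_lsCorrection (hB : IsStarProjection B) : B * lsCorrection G B = 0 := by
  have hBB : B * (1 - B) = 0 := by rw [mul_sub, mul_one, hB.isIdempotentElem.eq, sub_self]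
  simp only [lsCorrection, mul_neg, ← mul_assoc, hBB, zero_mul, neg_zero]

lemma norm_conj_proj_le (hB : IsStarProjection B) (hBG : ‖B * G‖ ≤ τ) : ‖B * G * B‖ ≤ τ :=
  (norm_mul_le _ _).trans
    ((mul_le_of_le_one_right (norm_nonneg _) hB.norm_le).trans hBG)

lemma isUnit_one_sub_of_norm_le_half {A : Matrix ι ι ℝ} (hA : ‖A‖ ≤ 1 / 2) : IsUnit (1 - A) := by
  have : CompleteSpace (Matrix ι ι ℝ) := FiniteDimensional.complete ℝ _
  exact isUnit_one_sub_of_norm_lt_one (hA.trans_lt (by norm_num))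

lemma one_sub_inv_eq_one_add {A : Matrix ι ι ℝ} (hA : ‖A‖ ≤ 1 / 2) :
    (1 - A)⁻¹ = 1 + A * (1 - A)⁻¹ := by
  have hinv := Matrix.mul_nonsing_inv (1 - A)
    ((Matrix.isUnit_iff_isUnit_det _).1 (isUnit_one_sub_of_norm_le_half hA))
  rw [sub_mul, one_mul, sub_eq_iff_eq_add] at hinv
  exact hinv

lemma norm_one_sub_inv_le_two {A : Matrix ι ι ℝ} (hA : ‖A‖ ≤ 1 / 2) : ‖(1 - A)⁻¹‖ ≤ 2 := by
  have hinv : ‖(1 - A)⁻¹‖ ≤ 1 + 1 / 2 * ‖(1 - A)⁻¹‖ := by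
    conv_lhs => rw [one_sub_inv_eq_one_add hA]
    refine (norm_add_le _ _).trans (add_le_add (IsStarProjection.one _).norm_le ?_)
    exact (norm_mul_le _ _).trans (mul_le_mul_of_nonneg_right hA (norm_nonneg _))
  linarith

lemma mul_add_lsCorrection (hG : IsStarProjection G) (hB : IsStarProjection B)
    (hA : ‖B * G * B‖ ≤ 1 / 2) : G * (B + lsCorrection G B) = 0 := by
  set K := (1 - B * G * B)⁻¹ * B with hK
  have hKfix : K = B + B * (G * (B * K)) := by
    conv_lhs => rw [hK, one_sub_inv_eq_one_add hA]
    simp only [add_mul, one_mul, mul_assoc, hK]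
  have hBK : B * K = K := by
    conv_lhs => rw [hKfix, mul_add, ← mul_assoc B B, hB.isIdempotentElem.eq]
    exact hKfix.symm
  have hcorr : lsCorrection G B = -((1 - B) * (G * K)) := by
    rw [← hBK]
    simp only [lsCorrection, hK, mul_assoc]
  have hsum : B + lsCorrection G B = K - G * K := by
    rw [hBK] at hKfix
    calc B + lsCorrection G B = B + B * (G * K) - G * K := by
          rw [hcorr, sub_mul, one_mul]
          abel
      _ = K - G * K := by rw [← hKfix]
  rw [hsum, mul_sub, ← mul_assoc G G, hG.isIdempotentElem.eq, sub_self]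

lemma norm_lsCorrection_le (hG : IsStarProjection G) (hB : IsStarProjection B)
    (hBG : ‖B * G‖ ≤ τ) (hτ : τ ≤ 1 / 2) : ‖lsCorrection G B‖ ≤ 2 * τ := by
  have hGB : ‖G * B‖ ≤ τ := by
    rw [← l2_opNorm_conjTranspose, conjTranspose_eq_transpose_of_trivial, transpose_mul,
      proj_transpose hG, proj_transpose hB]
    exact hBG
  have hτ0 : 0 ≤ τ := (norm_nonneg _).trans hBG
  have hinv := norm_one_sub_inv_le_two ((norm_conj_proj_le hB hBG).trans hτ)
  rw [lsCorrection, norm_neg]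
  calc ‖(1 - B) * (G * B) * (1 - B * G * B)⁻¹ * B‖
      ≤ ‖1 - B‖ * ‖G * B‖ * ‖(1 - B * G * B)⁻¹‖ * ‖B‖ :=
        (norm_mul_le _ _).trans (mul_le_mul_of_nonneg_right ((norm_mul_le _ _).trans
          (mul_le_mul_of_nonneg_right (norm_mul_le _ _) (norm_nonneg _))) (norm_nonneg _))
    _ ≤ 1 * τ * 2 * 1 := by
        gcongr
        exacts [hB.one_sub.norm_le, hB.norm_le]
    _ = 2 * τ := by ring

lemma sum_lsCorrection_row_sq_le (hG : IsStarProjection G) {b : ι → Bool}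
    (hA : ‖coordProj b * G * coordProj b‖ ≤ 1 / 2) (e : ι) :
    ∑ f, lsCorrection G (coordProj b) e f ^ 2 ≤ 4 * G e e := by
  set B := coordProj b with hBdef
  have hB : IsStarProjection B := isStarProjection_coordProj b
  set X := B * (1 - B * G * B)⁻¹ * B with hX
  have hrow : ∀ f, lsCorrection G B e f = if b e then 0 else -(Xᵀ *ᵥ G e) f := by
    intro f
    have hfac : lsCorrection G B = -((1 - B) * (G * X)) := by
      simp only [lsCorrection, hX, mul_assoc]
    have hdiag : (1 - B) * (G * X) = diagonal (fun e => if b e then 0 else 1) * (G * X) := by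
      rw [hBdef, coordProj, ← diagonal_one, diagonal_sub]
      congr 2
      ext e
      split_ifs <;> simp
    rw [hfac, Matrix.neg_apply, hdiag, diagonal_mul, mulVec_transpose]
    split_ifs
    · simp
    · rw [one_mul]; rfl
  have hXnorm : ‖Xᵀ‖ ≤ 2 := by
    rw [← conjTranspose_eq_transpose_of_trivial, l2_opNorm_conjTranspose]
    calc ‖X‖ ≤ ‖B‖ * ‖(1 - B * G * B)⁻¹‖ * ‖B‖ :=
          (norm_mul_le _ _).trans (mul_le_mul_of_nonneg_right (norm_mul_le _ _) (norm_nonneg _))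
      _ ≤ 1 * 2 * 1 := by
          gcongr
          exacts [hB.norm_le, norm_one_sub_inv_le_two hA, hB.norm_le]
      _ = 2 := by norm_num
  simp only [hrow]
  split_ifs
  · simpa using proj_diag_nonneg hG e
  · calc ∑ f, (-(Xᵀ *ᵥ G e) f) ^ 2 = l2norm (Xᵀ *ᵥ G e) ^ 2 := by simp only [neg_sq, l2norm_sq]
      _ ≤ (2 * l2norm (G e)) ^ 2 := pow_le_pow_left₀ (l2norm_nonneg _)
          ((l2norm_mulVec_le _ _).trans
            (mul_le_mul_of_nonneg_right hXnorm (l2norm_nonneg _))) 2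
      _ = 4 * G e e := by
          rw [mul_pow, ← dotProduct_self_eq_l2norm_sq, proj_row_dotProduct_self hG]
          norm_num

end LeastSquares

section Signs

/-- The random sign vector with support `b` and signs `ε`. -/
def signVec {ι : Type*} (b ε : ι → Bool) (e : ι) : ℝ := if b e then sgn (ε e) else 0

lemma coordProj_mulVec_sgn {ι : Type*} [Fintype ι] [DecidableEq ι] (b ε : ι → Bool) :
    coordProj b *ᵥ (fun e => sgn (ε e)) = signVec b ε := by
  ext e
  rw [coordProj_mulVec_apply, signVec]

lemma measureReal_lt_abs_lsCorrection_le {ι : Type*} [Fintype ι] [DecidableEq ι]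
    {G : Matrix ι ι ℝ} (hG : IsStarProjection G) {μ₀ : ℝ} (hμ0 : 0 < μ₀) (hμ : ∀ e, G e e ≤ μ₀)
    {b : ι → Bool} (hA : ‖coordProj b * G * coordProj b‖ ≤ 1 / 2) (e : ι) :
    (bernoulliPi ι half).real
        {ε | 1 / 4 < |(lsCorrection G (coordProj b) *ᵥ fun f => sgn (ε f)) e|} ≤
      2 * Real.exp (-1 / (128 * μ₀)) := by
  have hrow : ∑ f, lsCorrection G (coordProj b) e f ^ 2 ≤ ((4 * μ₀.toNNReal : NNReal) : ℝ) := by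
    push_cast
    rw [Real.coe_toNNReal _ hμ0.le]
    exact (sum_lsCorrection_row_sq_le hG hA e).trans (by linarith [hμ e])
  have hsub := hasSubgaussianMGF_sum_pi (ι := ι) hasSubgaussianMGF_sgn hrow
  refine (measureReal_lt_abs_le_of_subgaussian hsub (by simpa using hμ0)
    (by norm_num : (0 : ℝ) ≤ 1 / 4)).trans (le_of_eq ?_)
  push_cast
  rw [Real.coe_toNNReal _ hμ0.le]
  congr 2
  field_simp
  norm_num

variable {m n : Type*} [Fintype m] [Fintype n] [DecidableEq n]

lemma measureReal_lt_norm_toMat_signVec_le (hmn : Fintype.card n ≤ Fintype.card m) {κ : NNReal}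
    (hκ : 0 < κ) {ρ : I}
    (hρ : HasSubgaussianMGF (fun x : Bool × Bool => if x.1 then sgn x.2 else 0) (κ ^ 2)
      ((bernoulliMeasure true false ρ).prod (bernoulliMeasure true false half))) :
    ((bernoulliPi (m × n) ρ).prod (bernoulliPi (m × n) half)).real
        {z | 16 * (κ * √(Fintype.card m)) < ‖toMat (signVec z.1 z.2)‖} ≤
      Real.exp (-4 * Fintype.card m) := by
  classical
  have hnorm := measureReal_lt_norm_toMat_mulVec_le hmn hρ hκ one_pos
    (C := (1 : Matrix (m × n) (m × n) ℝ)) (IsStarProjection.one _).norm_le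
  simp only [NNReal.coe_one, one_mul, one_mulVec] at hnorm
  have harrow := measurePreserving_arrowProdEquivProdArrow Bool Bool (m × n)
    (fun _ => bernoulliMeasure true false ρ) (fun _ => bernoulliMeasure true false half)
  rw [← harrow.measureReal_preimage (Set.toFinite _).measurableSet.nullMeasurableSet]
  exact hnorm

/-- There is a small correction of the sign vector, supported off `{e | b e = true}`, that makes it
orthogonal to the range of `G`. -/
def IsSignCorrectable (G : Matrix (m × n) (m × n) ℝ) (τ : ℝ) (b ε : m × n → Bool) : Prop :=
  ∃ h : m × n → ℝ, (∀ e, b e = true → h e = 0) ∧ (∀ e, |h e| ≤ 1 / 4) ∧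
    ‖toMat h‖ ≤ 16 * (2 * τ * √(Fintype.card m)) ∧ G *ᵥ (signVec b ε + h) = 0

variable [DecidableEq m]

lemma measureReal_not_isSignCorrectable_le (hmn : Fintype.card n ≤ Fintype.card m)
    {G : Matrix (m × n) (m × n) ℝ} (hG : IsStarProjection G) {μ₀ : ℝ} (hμ0 : 0 < μ₀)
    (hμ : ∀ e, G e e ≤ μ₀) {b : m × n → Bool} {τ : ℝ} (hτ0 : 0 < τ) (hτ : τ ≤ 1 / 2)
    (hb : ‖coordProj b * G‖ ≤ τ) :
    (bernoulliPi (m × n) half).real {ε | ¬ IsSignCorrectable G τ b ε} ≤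
      Fintype.card (m × n) * (2 * Real.exp (-1 / (128 * μ₀))) +
        Real.exp (-4 * Fintype.card m) := by
  have hB := isStarProjection_coordProj b
  have hA := (norm_conj_proj_le hB hb).trans hτ
  have hnorm := measureReal_lt_norm_toMat_mulVec_le hmn (κ := 1) (B := (2 * τ).toNNReal)
    (by simpa using hasSubgaussianMGF_sgn) one_pos (Real.toNNReal_pos.2 (by positivity))
    ((norm_lsCorrection_le hG hB hb hτ).trans (Real.le_coe_toNNReal _))
  rw [NNReal.coe_one, mul_one, Real.coe_toNNReal _ (by positivity)] at hnorm
  refine (measureReal_mono fun ε (hε : ¬ IsSignCorrectable G τ b ε) => ?_).trans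
    ((measureReal_union_le _ _).trans (add_le_add
      (measureReal_exists_le _ (measureReal_lt_abs_lsCorrection_le hG hμ0 hμ hA)) hnorm))
  by_contra hcon
  simp only [Set.mem_union, Set.mem_ofPred_eq, not_or, not_exists, not_lt] at hcon
  refine hε ⟨_, fun e he => ?_, hcon.1, hcon.2, ?_⟩
  · have hzero := congrFun (congrArg (· *ᵥ fun f => sgn (ε f)) (proj_mul_lsCorrection
      (G := G) hB)) e
    simpa only [← mulVec_mulVec, coordProj_mulVec_apply, he, if_true, zero_mulVec,
      Pi.zero_apply] using hzero
  · rw [← coordProj_mulVec_sgn, ← add_mulVec, mulVec_mulVec, mul_add_lsCorrection hG hB hA,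
      zero_mulVec]

end Signs

/-! ### The projection onto the tangent space -/

section Tangent

open scoped Kronecker

variable {m n k : Type*} [Fintype k]

lemma toMat_kronecker_mulVec [Fintype m] [Fintype n] (A : Matrix m m ℝ) (B : Matrix n n ℝ)
    (f : m × n → ℝ) :
    toMat ((A ⊗ₖ B) *ᵥ f) = A * toMat f * Bᵀ := by
  ext i j
  simp only [toMat_apply, mulVec, dotProduct, Fintype.sum_prod_type, kroneckerMap_apply,
    Matrix.mul_apply, transpose_apply, Finset.sum_mul]
  rw [Finset.sum_comm]
  exact Finset.sum_congr rfl fun _ _ => Finset.sum_congr rfl fun _ _ => by ring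

variable [DecidableEq m] [DecidableEq n]

/-- The orthogonal projection onto the complement of the column space of a matrix `U` with
orthonormal columns. -/
def coproj (U : Matrix m k ℝ) : Matrix m m ℝ := 1 - U * Uᵀ

lemma coproj_apply_self (U : Matrix m k ℝ) (i : m) : coproj U i i = 1 - ∑ l, U i l ^ 2 := by
  simp [coproj, Matrix.mul_apply, sq]

/-- The orthogonal projection `P_T` onto the tangent space `T = {U Qᵀ + R Vᵀ}`, acting on vectors
of entries. -/
def projT (U : Matrix m k ℝ) (V : Matrix n k ℝ) : Matrix (m × n) (m × n) ℝ :=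
  1 - coproj U ⊗ₖ coproj V

lemma projT_apply_self_le (U : Matrix m k ℝ) (V : Matrix n k ℝ) (e : m × n) :
    projT U V e e ≤ ∑ l, U e.1 l ^ 2 + ∑ l, V e.2 l ^ 2 := by
  have hdiag : projT U V e e = 1 - coproj U e.1 e.1 * coproj V e.2 e.2 := by simp [projT]
  rw [hdiag, coproj_apply_self, coproj_apply_self]
  have hU : 0 ≤ ∑ l, U e.1 l ^ 2 := Finset.sum_nonneg fun _ _ => sq_nonneg _
  have hV : 0 ≤ ∑ l, V e.2 l ^ 2 := Finset.sum_nonneg fun _ _ => sq_nonneg _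
  linarith [mul_nonneg hU hV]

variable [Fintype m] [Fintype n]

variable [DecidableEq k] {U : Matrix m k ℝ} {V : Matrix n k ℝ}

lemma coproj_mul (hU : Uᵀ * U = 1) : coproj U * U = 0 := by
  rw [coproj, Matrix.sub_mul, Matrix.mul_assoc, hU, Matrix.one_mul, Matrix.mul_one, sub_self]

lemma isStarProjection_coproj (hU : Uᵀ * U = 1) : IsStarProjection (coproj U) := by
  refine IsStarProjection.one_sub (isStarProjection_iff_transpose.2 ⟨?_, ?_⟩)
  · rw [Matrix.mul_assoc, ← Matrix.mul_assoc Uᵀ, hU, Matrix.one_mul]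
  · rw [transpose_mul, transpose_transpose]

lemma l2norm_transpose_mulVec_sq_add (hU : Uᵀ * U = 1) (x : m → ℝ) :
    l2norm (Uᵀ *ᵥ x) ^ 2 + l2norm (coproj U *ᵥ x) ^ 2 = l2norm x ^ 2 := by
  have hP := isStarProjection_coproj hU
  have hUx : (Uᵀ *ᵥ x) ⬝ᵥ (Uᵀ *ᵥ x) = x ⬝ᵥ ((U * Uᵀ) *ᵥ x) := by
    rw [← mulVec_mulVec, dotProduct_mulVec x, ← mulVec_transpose]
  simp only [← dotProduct_self_eq_l2norm_sq]
  rw [proj_dotProduct_comm hP, proj_mulVec_mulVec hP, hUx, ← dotProduct_add, ← add_mulVec,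
    coproj, add_sub_cancel, one_mulVec]

lemma isStarProjection_projT (hU : Uᵀ * U = 1) (hV : Vᵀ * V = 1) :
    IsStarProjection (projT U V) := by
  have hPU := isStarProjection_coproj hU
  have hPV := isStarProjection_coproj hV
  refine IsStarProjection.one_sub (isStarProjection_iff_transpose.2 ⟨?_, ?_⟩)
  · rw [← mul_kronecker_mul, hPU.isIdempotentElem.eq, hPV.isIdempotentElem.eq]
  · rw [← kroneckerMap_transpose, proj_transpose hPU, proj_transpose hPV]

lemma toMat_sub_projT_mulVec (hV : Vᵀ * V = 1) (f : m × n → ℝ) :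
    toMat (f - projT U V *ᵥ f) = coproj U * toMat f * coproj V := by
  have hcompl : f - projT U V *ᵥ f = (coproj U ⊗ₖ coproj V) *ᵥ f := by
    rw [projT, sub_mulVec, one_mulVec, sub_sub_cancel]
  rw [hcompl, toMat_kronecker_mulVec, proj_transpose (isStarProjection_coproj hV)]

lemma norm_toMat_sub_projT_mulVec_le (hU : Uᵀ * U = 1) (hV : Vᵀ * V = 1) (f : m × n → ℝ) :
    ‖toMat (f - projT U V *ᵥ f)‖ ≤ ‖toMat f‖ := by
  rw [toMat_sub_projT_mulVec hV]
  calc ‖coproj U * toMat f * coproj V‖ ≤ ‖coproj U‖ * ‖toMat f‖ * ‖coproj V‖ :=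
        (l2_opNorm_mul _ _).trans
          (mul_le_mul_of_nonneg_right (l2_opNorm_mul _ _) (norm_nonneg _))
    _ ≤ 1 * ‖toMat f‖ * 1 := by
        gcongr
        exacts [(isStarProjection_coproj hU).norm_le, (isStarProjection_coproj hV).norm_le]
    _ = ‖toMat f‖ := by ring

lemma projT_mulVec_toMat_symm (hU : Uᵀ * U = 1) (hV : Vᵀ * V = 1) :
    projT U V *ᵥ toMat.symm (U * Vᵀ) = toMat.symm (U * Vᵀ) := by
  refine (sub_eq_zero.1 (toMat.injective ?_)).symm
  rw [toMat_sub_projT_mulVec hV, LinearEquiv.apply_symm_apply, ← Matrix.mul_assoc,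
    coproj_mul hU, Matrix.zero_mul, Matrix.zero_mul, map_zero]

/-- Pythagoras in the domain and in the codomain: `U Vᵀ` and `W` act between orthogonal
subspaces. -/
lemma norm_mul_transpose_add_le_one (hU : Uᵀ * U = 1) (hV : Vᵀ * V = 1) {w : m × n → ℝ}
    (hw : ‖toMat w‖ ≤ 1) (hGw : projT U V *ᵥ w = 0) : ‖U * Vᵀ + toMat w‖ ≤ 1 := by
  have hW : toMat w = coproj U * toMat w * coproj V := by
    rw [← toMat_sub_projT_mulVec hV, hGw, sub_zero]
  refine opNorm_le_of_dotProduct_mulVec_le zero_le_one fun x y => ?_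
  have huv : x ⬝ᵥ ((U * Vᵀ) *ᵥ y) = (Uᵀ *ᵥ x) ⬝ᵥ (Vᵀ *ᵥ y) := by
    rw [← mulVec_mulVec, dotProduct_mulVec, ← mulVec_transpose]
  have hxy : x ⬝ᵥ (toMat w *ᵥ y) = (coproj U *ᵥ x) ⬝ᵥ (toMat w *ᵥ (coproj V *ᵥ y)) := by
    conv_lhs => rw [hW]
    rw [← mulVec_mulVec, ← mulVec_mulVec, ← proj_dotProduct_comm (isStarProjection_coproj hU)]
  rw [add_mulVec, dotProduct_add, huv, hxy]
  have huv_le := (le_abs_self _).trans (abs_dotProduct_le (Uᵀ *ᵥ x) (Vᵀ *ᵥ y))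
  have hw_le := (dotProduct_mulVec_le (toMat w) (coproj U *ᵥ x) (coproj V *ᵥ y)).trans
    (mul_le_of_le_one_left (mul_nonneg (l2norm_nonneg _) (l2norm_nonneg _)) hw)
  have hx := l2norm_transpose_mulVec_sq_add hU x
  have hy := l2norm_transpose_mulVec_sq_add hV y
  set a := l2norm (Uᵀ *ᵥ x)
  set b := l2norm (Vᵀ *ᵥ y)
  set c := l2norm (coproj U *ᵥ x)
  set d := l2norm (coproj V *ᵥ y)
  have hcauchy : a * b + c * d ≤ l2norm x * l2norm y := by
    refine abs_le_of_sq_le_sq' ?_ (mul_nonneg (l2norm_nonneg x) (l2norm_nonneg y)) |>.2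
    rw [mul_pow, ← hx, ← hy]
    linarith [sq_nonneg (a * d - b * c)]
  linarith

end Tangent

/-! ### Frobenius, spectral and nuclear norms -/

section Nuclear

lemma norm_toMat_le_l2norm {m n : Type*} [Fintype m] [Fintype n] [DecidableEq n]
    (f : m × n → ℝ) : ‖toMat f‖ ≤ l2norm f := by
  refine opNorm_le_of_dotProduct_mulVec_le (l2norm_nonneg f) fun x y => ?_
  rw [dotProduct_toMat_mulVec, ← l2norm_mul_prod, mul_comm]
  exact (le_abs_self _).trans (abs_dotProduct_le _ _)

lemma l2norm_le_norm_toMat_mul_sqrt {m n : Type*} [Fintype m] [Fintype n] [DecidableEq n]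
    (f : m × n → ℝ) : l2norm f ≤ ‖toMat f‖ * √(Fintype.card n) := by
  have hcol : ∀ j, ∑ i, f (i, j) ^ 2 ≤ ‖toMat f‖ ^ 2 := fun j => by
    have h := l2norm_mulVec_le (toMat f) (Pi.single j 1)
    rw [mulVec_single_one, l2norm_eq_sqrt (Pi.single j 1)] at h
    have hsq := pow_le_pow_left₀ (l2norm_nonneg _) h 2
    simpa [l2norm_sq, Pi.single_apply, toMat_apply] using hsq
  rw [l2norm_eq_sqrt, Fintype.sum_prod_type_right]
  refine Real.sqrt_le_iff.2 ⟨by positivity, (Finset.sum_le_sum fun j _ => hcol j).trans ?_⟩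
  rw [mul_pow, Real.sq_sqrt (Nat.cast_nonneg _)]
  simp [mul_comm]

variable {n1 n2 r : ℕ}

lemma frob_eq_l2norm (A : Matrix (Fin n1) (Fin n2) ℝ) : frob A = l2norm (toMat.symm A) := by
  simp [frob, l2norm_eq_sqrt, toMat_symm_apply, Fintype.sum_prod_type]

lemma minner_eq_dotProduct (A B : Matrix (Fin n1) (Fin n2) ℝ) :
    minner A B = toMat.symm A ⬝ᵥ toMat.symm B := by
  simp [minner, dotProduct, toMat_symm_apply, Fintype.sum_prod_type]

lemma spec_eq_norm (A : Matrix (Fin n1) (Fin n2) ℝ) : spec A = ‖A‖ := by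
  rw [l2_opNorm_def, ← ContinuousLinearMap.sSup_unitClosedBall_eq_norm, spec]
  congr 1
  ext c
  have hball : ∀ x : Fin n2 → ℝ, ∑ j, x j ^ 2 ≤ 1 ↔
      WithLp.toLp 2 x ∈ Metric.closedBall (0 : EuclideanSpace ℝ (Fin n2)) 1 := fun x => by
    rw [mem_closedBall_zero_iff, ← l2norm_sq, sq_le_one_iff₀ (l2norm_nonneg x), l2norm]
  have himage : ∀ x : Fin n2 → ℝ, √(∑ i, (∑ j, A i j * x j) ^ 2) =
      ‖toEuclideanLin A (WithLp.toLp 2 x)‖ := fun x => (l2norm_eq_sqrt (A *ᵥ x)).symm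
  constructor
  · rintro ⟨x, hx, rfl⟩
    exact ⟨WithLp.toLp 2 x, (hball x).1 hx, (himage x).symm⟩
  · rintro ⟨x, hx, rfl⟩
    exact ⟨x.ofLp, (hball x.ofLp).2 hx, (himage x.ofLp).symm⟩

lemma minner_le_nuc {A B : Matrix (Fin n1) (Fin n2) ℝ} (hB : ‖B‖ ≤ 1) : minner A B ≤ nuc A := by
  refine le_csSup ⟨l2norm (toMat.symm A) * √n2, ?_⟩ ⟨B, (spec_eq_norm B).trans_le hB, rfl⟩
  rintro c ⟨C, hC, rfl⟩
  rw [minner_eq_dotProduct]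
  refine (le_abs_self _).trans ((abs_dotProduct_le _ _).trans
    (mul_le_mul_of_nonneg_left ?_ (l2norm_nonneg _)))
  have hCle := l2norm_le_norm_toMat_mul_sqrt (toMat.symm C)
  rw [LinearEquiv.apply_symm_apply, Fintype.card_fin] at hCle
  rw [spec_eq_norm] at hC
  exact hCle.trans (mul_le_of_le_one_left (Real.sqrt_nonneg _) hC)

lemma minner_eq_trace (A B : Matrix (Fin n1) (Fin n2) ℝ) : minner A B = trace (Aᵀ * B) := by
  simp only [minner, trace, diag_apply, Matrix.mul_apply, transpose_apply]
  exact Finset.sum_comm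

variable {U : Matrix (Fin n1) (Fin r) ℝ} {V : Matrix (Fin n2) (Fin r) ℝ}

lemma minner_mul_diagonal_mul (s : Fin r → ℝ) (B : Matrix (Fin n1) (Fin n2) ℝ) :
    minner (U * diagonal s * Vᵀ) B = ∑ k, s k * (Uᵀ * B * V) k k := by
  rw [minner_eq_trace, transpose_mul, transpose_mul, transpose_transpose, diagonal_transpose,
    Matrix.mul_assoc V, trace_mul_comm, Matrix.mul_assoc, Matrix.mul_assoc,
    ← Matrix.mul_assoc Uᵀ]
  simp [trace, diagonal_mul]

lemma l2norm_col_of_transpose_mul_self {ι κ : Type*} [Fintype ι] [DecidableEq κ]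
    {U : Matrix ι κ ℝ} (hU : Uᵀ * U = 1) (k : κ) : l2norm (U.col k) = 1 := by
  have h : U.col k ⬝ᵥ U.col k = 1 := by
    simpa [Matrix.mul_apply, dotProduct] using congrFun (congrFun hU k) k
  rw [dotProduct_self_eq_l2norm_sq] at h
  exact (pow_eq_one_iff_of_nonneg (l2norm_nonneg _) two_ne_zero).1 h

lemma nuc_mul_diagonal_mul_le (hU : Uᵀ * U = 1) (hV : Vᵀ * V = 1) {s : Fin r → ℝ}
    (hs : ∀ k, 0 ≤ s k) : nuc (U * diagonal s * Vᵀ) ≤ ∑ k, s k := by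
  refine csSup_le ⟨_, 0, by simp [spec_eq_norm], rfl⟩ ?_
  rintro c ⟨B, hB, rfl⟩
  rw [minner_mul_diagonal_mul]
  refine Finset.sum_le_sum fun k _ => mul_le_of_le_one_right (hs k) ?_
  have hentry : (Uᵀ * B * V) k k = U.col k ⬝ᵥ (B *ᵥ V.col k) := by
    rw [Matrix.mul_assoc]
    rfl
  rw [hentry]
  refine (dotProduct_mulVec_le B _ _).trans ?_
  rwa [l2norm_col_of_transpose_mul_self hU, l2norm_col_of_transpose_mul_self hV, mul_one,
    mul_one, ← spec_eq_norm]

lemma minner_mul_diagonal_mul_eq_sum (hU : Uᵀ * U = 1) (hV : Vᵀ * V = 1) (s : Fin r → ℝ)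
    {w : Fin n1 × Fin n2 → ℝ} (hGw : projT U V *ᵥ w = 0) :
    minner (U * diagonal s * Vᵀ) (U * Vᵀ + toMat w) = ∑ k, s k := by
  have hW : toMat w * V = 0 := by
    have h := toMat_sub_projT_mulVec (U := U) hV w
    rw [hGw, sub_zero] at h
    rw [h, Matrix.mul_assoc, coproj_mul hV, Matrix.mul_zero]
  have hB : Uᵀ * (U * Vᵀ + toMat w) * V = 1 := by
    rw [Matrix.mul_assoc, Matrix.add_mul, hW, add_zero, Matrix.mul_assoc, hV, Matrix.mul_one, hU]
  simp [minner_mul_diagonal_mul, hB]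

end Nuclear

/-! ### Recovery from a dual certificate -/

section Projections

variable {ι : Type*} [Fintype ι] {G P : Matrix ι ι ℝ}

lemma exists_dotProduct_eq_half_l2norm_sub (hG : IsStarProjection G) (h : ι → ℝ) :
    ∃ u, G *ᵥ u = 0 ∧ l2norm u ≤ 1 / 2 ∧ u ⬝ᵥ h = 1 / 2 * l2norm (h - G *ᵥ h) := by
  set d := h - G *ᵥ h with hd
  have hGd : G *ᵥ d = 0 := by rw [hd, mulVec_sub, proj_mulVec_mulVec hG, sub_self]
  have hdh : d ⬝ᵥ h = l2norm d ^ 2 := by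
    have horth : d ⬝ᵥ (G *ᵥ h) = 0 := by rw [← proj_dotProduct_comm hG, hGd, zero_dotProduct]
    rw [← dotProduct_self_eq_l2norm_sq, ← sub_zero (d ⬝ᵥ h), ← horth, ← dotProduct_sub]
  refine ⟨(1 / 2 * (l2norm d)⁻¹) • d, by rw [mulVec_smul, hGd, smul_zero], ?_, ?_⟩
  · rw [l2norm_smul, abs_of_nonneg (mul_nonneg one_half_pos.le (inv_nonneg.2 (l2norm_nonneg d))),
      mul_assoc]
    exact mul_le_of_le_one_right one_half_pos.le inv_mul_le_one
  · rw [smul_dotProduct, hdh, smul_eq_mul, mul_assoc, sq, ← mul_assoc, ← mul_assoc, mul_assoc]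
    rcases eq_or_ne (l2norm d) 0 with h0 | h0
    · simp [h0]
    · field_simp

/-- If no vector in the range of `G` is concentrated on the range of `P`, the `G`-part of `h` is
visible in `h + k`, up to the parts of `h` and `k` outside the two ranges. -/
lemma l2norm_proj_mulVec_le_of_norm_mul_le_half [DecidableEq ι] (hP : IsStarProjection P)
    (hG : IsStarProjection G) (hPG : ‖P * G‖ ≤ 1 / 2) (h k : ι → ℝ) :
    l2norm (G *ᵥ h) ≤
      2 * (l2norm (h + k) + l2norm (h - G *ᵥ h) + l2norm (k - P *ᵥ k)) := by
  set g := G *ᵥ h with hg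
  have hPg : l2norm (P *ᵥ g) ≤ 1 / 2 * l2norm g := by
    have hPGg : P *ᵥ g = (P * G) *ᵥ g := by rw [← mulVec_mulVec, hg, proj_mulVec_mulVec hG]
    rw [hPGg]
    exact (l2norm_mulVec_le _ _).trans (mul_le_mul_of_nonneg_right hPG (l2norm_nonneg g))
  have hsplit : g = P *ᵥ g + ((1 - P) *ᵥ (h + k) - (1 - P) *ᵥ (h - g) - (k - P *ᵥ k)) := by
    have hk : k - P *ᵥ k = (1 - P) *ᵥ k := by rw [sub_mulVec, one_mulVec]
    rw [hk, ← mulVec_sub, ← mulVec_sub, sub_mulVec, one_mulVec]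
    have hgk : h + k - (h - g) - k = g := by abel
    rw [hgk, add_sub_cancel]
  have hle : l2norm g ≤ l2norm (P *ᵥ g) + (l2norm ((1 - P) *ᵥ (h + k)) +
      l2norm ((1 - P) *ᵥ (h - g)) + l2norm (k - P *ᵥ k)) := by
    conv_lhs => rw [hsplit]
    exact (l2norm_add_le _ _).trans (add_le_add_right ((l2norm_sub_le _ _).trans
      (add_le_add_left (l2norm_sub_le _ _) _)) _)
  linarith [l2norm_proj_mulVec_le hP.one_sub (h + k), l2norm_proj_mulVec_le hP.one_sub (h - g)]

end Projections

section Deterministic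

variable {n1 n2 r : ℕ} {U : Matrix (Fin n1) (Fin r) ℝ} {V : Matrix (Fin n2) (Fin r) ℝ}

/-- A subgradient `U Vᵀ + w` with `‖w‖ ≤ 1/2` leaves room to add a multiple of the normal part of
the perturbation. -/
lemma nuc_add_dotProduct_add_le (hU : Uᵀ * U = 1) (hV : Vᵀ * V = 1) {s : Fin r → ℝ}
    (hs : ∀ k, 0 ≤ s k) {w : Fin n1 × Fin n2 → ℝ} (hw : ‖toMat w‖ ≤ 1 / 2)
    (hGw : projT U V *ᵥ w = 0) (h : Fin n1 × Fin n2 → ℝ) :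
    nuc (U * diagonal s * Vᵀ) + (toMat.symm (U * Vᵀ) + w) ⬝ᵥ h +
      1 / 2 * l2norm (h - projT U V *ᵥ h) ≤ nuc (U * diagonal s * Vᵀ + toMat h) := by
  obtain ⟨u, hGu, hu, huh⟩ :=
    exists_dotProduct_eq_half_l2norm_sub (isStarProjection_projT hU hV) h
  have hGwu : projT U V *ᵥ (w + u) = 0 := by rw [mulVec_add, hGw, hGu, add_zero]
  have hwu : ‖toMat (w + u)‖ ≤ 1 := by
    rw [map_add]
    linarith [norm_add_le (toMat w) (toMat u), norm_toMat_le_l2norm u]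
  have hdual := minner_le_nuc (A := U * diagonal s * Vᵀ + toMat h)
    (norm_mul_transpose_add_le_one hU hV hwu hGwu)
  have hadd : minner (U * diagonal s * Vᵀ + toMat h) (U * Vᵀ + toMat (w + u)) =
      minner (U * diagonal s * Vᵀ) (U * Vᵀ + toMat (w + u)) +
        (toMat.symm (U * Vᵀ) + w + u) ⬝ᵥ h := by
    rw [minner_eq_dotProduct, minner_eq_dotProduct, map_add, add_dotProduct,
      LinearEquiv.symm_apply_apply, dotProduct_comm h, map_add, LinearEquiv.symm_apply_apply,
      add_assoc _ w]
  rw [hadd, minner_mul_diagonal_mul_eq_sum hU hV s hGwu, add_dotProduct _ u, huh] at hdual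
  linarith [nuc_mul_diagonal_mul_le hU hV hs]

lemma sgn_mul_le_abs_add_sub_abs (x : Bool) {a : ℝ} (ha : 0 ≤ a) (t : ℝ) :
    sgn x * t ≤ |sgn x * a + t| - |sgn x * a| := by
  cases x
  · simp only [sgn, Bool.false_eq_true, if_false, neg_mul, one_mul, abs_neg, abs_of_nonneg ha]
    linarith [neg_abs_le (-a + t)]
  · simp only [sgn, if_true, one_mul, abs_of_nonneg ha]
    linarith [le_abs_self (a + t)]

lemma l2norm_le_sum_abs {ι : Type*} [Fintype ι] (v : ι → ℝ) : l2norm v ≤ ∑ e, |v e| := by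
  refine abs_le_of_sq_le_sq' ?_ (Finset.sum_nonneg fun _ _ => abs_nonneg _) |>.2
  rw [l2norm_sq]
  simp only [← sq_abs (v _)]
  exact Finset.sum_sq_le_sq_sum_of_nonneg fun _ _ => abs_nonneg _

lemma l1norm_eq_sum (A : Matrix (Fin n1) (Fin n2) ℝ) : l1norm A = ∑ p, |toMat.symm A p| := by
  simp [l1norm, toMat_symm_apply, Fintype.sum_prod_type]

lemma l1norm_add_dotProduct_add_le {b ε : Fin n1 × Fin n2 → Bool} {a : Fin n1 × Fin n2 → ℝ}
    (ha : ∀ p, 0 ≤ a p) {lam : ℝ} (hl : 0 ≤ lam) {Λ : Fin n1 × Fin n2 → ℝ}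
    (hon : ∀ p, b p = true → Λ p = lam * sgn (ε p)) (hoff : ∀ p, b p = false → |Λ p| ≤ lam / 2)
    (k : Fin n1 × Fin n2 → ℝ) :
    lam * l1norm (toMat (signVec b ε * a)) + Λ ⬝ᵥ k + lam / 2 * l2norm (k - coordProj b *ᵥ k) ≤
      lam * l1norm (toMat (signVec b ε * a) + toMat k) := by
  have hl2 := mul_le_mul_of_nonneg_left (l2norm_le_sum_abs (k - coordProj b *ᵥ k))
    (show 0 ≤ lam / 2 by linarith)
  refine (add_le_add_right hl2 _).trans ?_
  rw [← map_add, l1norm_eq_sum, l1norm_eq_sum, dotProduct, Finset.mul_sum, Finset.mul_sum,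
    Finset.mul_sum, ← Finset.sum_add_distrib, ← Finset.sum_add_distrib]
  refine Finset.sum_le_sum fun p _ => ?_
  simp only [LinearEquiv.symm_apply_apply, Pi.add_apply, Pi.sub_apply, Pi.mul_apply,
    coordProj_mulVec_apply, signVec]
  cases hp : b p
  · have hΛ : Λ p * k p ≤ lam / 2 * |k p| := (le_abs_self _).trans
      ((abs_mul _ _).trans_le (mul_le_mul_of_nonneg_right (hoff p hp) (abs_nonneg _)))
    simp only [Bool.false_eq_true, if_false, zero_mul, abs_zero, mul_zero, sub_zero, zero_add]
    linarith
  · have hsgn := mul_le_mul_of_nonneg_left (sgn_mul_le_abs_add_sub_abs (ε p) (ha p) (k p)) hl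
    simp only [hon p hp, if_true, sub_self, abs_zero, mul_zero, add_zero]
    linarith

lemma frob_nonneg (A : Matrix (Fin n1) (Fin n2) ℝ) : 0 ≤ frob A := Real.sqrt_nonneg _

lemma frob_neg (A : Matrix (Fin n1) (Fin n2) ℝ) : frob (-A) = frob A := by
  rw [frob_eq_l2norm, frob_eq_l2norm, map_neg, l2norm_neg]

lemma l2norm_sub_frob_le (f : Fin n1 × Fin n2 → ℝ) (Z : Matrix (Fin n1) (Fin n2) ℝ) :
    l2norm f - frob Z ≤ frob (toMat f - Z) := by
  have h := l2norm_add_le (f - toMat.symm Z) (toMat.symm Z)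
  rw [sub_add_cancel] at h
  rw [frob_eq_l2norm, frob_eq_l2norm, map_sub, LinearEquiv.symm_apply_apply]
  linarith

lemma pairDist_le_add (L S L' S' : Matrix (Fin n1) (Fin n2) ℝ) :
    pairDist L S L' S' ≤ frob (L - L') + frob (S - S') := by
  refine Real.sqrt_le_iff.2 ⟨add_nonneg (frob_nonneg _) (frob_nonneg _), ?_⟩
  linarith [mul_nonneg (frob_nonneg (L - L')) (frob_nonneg (S - S')),
    add_sq (frob (L - L')) (frob (S - S'))]

/-- A dual certificate `Λ` for the support `b`, the signs `ε` and the column and row spaces `U`,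
`V`, together with the transversality of the tangent space and the support. -/
structure IsCert (U : Matrix (Fin n1) (Fin r) ℝ) (V : Matrix (Fin n2) (Fin r) ℝ)
    (b ε : Fin n1 × Fin n2 → Bool) (lam : ℝ) (Λ : Fin n1 × Fin n2 → ℝ) : Prop where
  on : ∀ p, b p = true → Λ p = lam * sgn (ε p)
  off : ∀ p, b p = false → |Λ p| ≤ lam / 2
  tangent : l2norm (projT U V *ᵥ Λ - toMat.symm (U * Vᵀ)) ≤ lam / 8
  normal : ‖toMat (Λ - projT U V *ᵥ Λ)‖ ≤ 1 / 2
  transversal : ‖coordProj b * projT U V‖ ≤ 1 / 2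

namespace IsCert

variable {b ε : Fin n1 × Fin n2 → Bool} {lam : ℝ} {Λ : Fin n1 × Fin n2 → ℝ}

lemma neg_le_pairing (hΛ : IsCert U V b ε lam Λ) (hU : Uᵀ * U = 1) (hV : Vᵀ * V = 1)
    (h k : Fin n1 × Fin n2 → ℝ) :
    -(lam / 8 * l2norm (projT U V *ᵥ h)) - l2norm Λ * l2norm (h + k) ≤
      (toMat.symm (U * Vᵀ) + (Λ - projT U V *ᵥ Λ)) ⬝ᵥ h + Λ ⬝ᵥ k := by
  set G := projT U V with hGdef
  set u := toMat.symm (U * Vᵀ) with hu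
  have hG : IsStarProjection G := isStarProjection_projT hU hV
  have hsplit : (u + (Λ - G *ᵥ Λ)) ⬝ᵥ h + Λ ⬝ᵥ k = Λ ⬝ᵥ (h + k) - (G *ᵥ Λ - u) ⬝ᵥ (G *ᵥ h) := by
    have hproj : (G *ᵥ Λ - u) ⬝ᵥ (G *ᵥ h) = (G *ᵥ Λ - u) ⬝ᵥ h := by
      rw [← proj_dotProduct_comm hG, mulVec_sub, proj_mulVec_mulVec hG, hGdef, hu,
        projT_mulVec_toMat_symm hU hV]
    rw [hproj, add_dotProduct, sub_dotProduct, sub_dotProduct, dotProduct_add]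
    ring
  have htan := (le_abs_self _).trans ((abs_dotProduct_le (G *ᵥ Λ - u) (G *ᵥ h)).trans
    (mul_le_mul_of_nonneg_right hΛ.tangent (l2norm_nonneg _)))
  have hsum := (abs_le.1 (abs_dotProduct_le Λ (h + k))).1
  linarith

lemma l2norm_le (hΛ : IsCert U V b ε lam Λ) :
    l2norm Λ ≤ 1 / 2 * √n2 + lam / 8 + l2norm (toMat.symm (U * Vᵀ)) := by
  set u := toMat.symm (U * Vᵀ)
  have hnormal := l2norm_le_norm_toMat_mul_sqrt (Λ - projT U V *ᵥ Λ)
  have hhalf := mul_le_mul_of_nonneg_right hΛ.normal (Real.sqrt_nonneg n2)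
  have hsplit : Λ = (Λ - projT U V *ᵥ Λ) + ((projT U V *ᵥ Λ - u) + u) := by abel
  have hadd := l2norm_add_le (Λ - projT U V *ᵥ Λ) ((projT U V *ᵥ Λ - u) + u)
  rw [← hsplit] at hadd
  rw [Fintype.card_fin] at hnormal
  linarith [l2norm_add_le (projT U V *ᵥ Λ - u) u, hΛ.tangent]

lemma objective_gap_le (hΛ : IsCert U V b ε lam Λ) (hU : Uᵀ * U = 1) (hV : Vᵀ * V = 1)
    {s : Fin r → ℝ} (hs : ∀ k, 0 ≤ s k) {a : Fin n1 × Fin n2 → ℝ} (ha : ∀ p, 0 ≤ a p)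
    (hl : 0 ≤ lam) (h k : Fin n1 × Fin n2 → ℝ) :
    nuc (U * diagonal s * Vᵀ) + lam * l1norm (toMat (signVec b ε * a)) +
        (1 / 2 * l2norm (h - projT U V *ᵥ h) + lam / 2 * l2norm (k - coordProj b *ᵥ k)
          - lam / 8 * l2norm (projT U V *ᵥ h) - l2norm Λ * l2norm (h + k)) ≤
      nuc (U * diagonal s * Vᵀ + toMat h) +
        lam * l1norm (toMat (signVec b ε * a) + toMat k) := by
  have hGw : projT U V *ᵥ (Λ - projT U V *ᵥ Λ) = 0 := by
    rw [mulVec_sub, proj_mulVec_mulVec (isStarProjection_projT hU hV), sub_self]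
  linarith [nuc_add_dotProduct_add_le hU hV hs hΛ.normal hGw h,
    l1norm_add_dotProduct_add_le ha hl hΛ.on hΛ.off k, hΛ.neg_le_pairing hU hV h k]

lemma gap_le_of_isRootPCPMin (hΛ : IsCert U V b ε lam Λ) (hU : Uᵀ * U = 1) (hV : Vᵀ * V = 1)
    {s : Fin r → ℝ} (hs : ∀ k, 0 ≤ s k) {a : Fin n1 × Fin n2 → ℝ} (ha : ∀ p, 0 ≤ a p)
    (hl : 0 ≤ lam) {μ : ℝ} (hμ : 0 ≤ μ) {Z : Matrix (Fin n1) (Fin n2) ℝ}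
    {h k : Fin n1 × Fin n2 → ℝ}
    (hmin : IsRootPCPMin (U * diagonal s * Vᵀ + toMat (signVec b ε * a) + Z) lam μ
      (U * diagonal s * Vᵀ + toMat h) (toMat (signVec b ε * a) + toMat k)) :
    μ * (l2norm (h + k) - frob Z) +
        (1 / 2 * l2norm (h - projT U V *ᵥ h) + lam / 2 * l2norm (k - coordProj b *ᵥ k)
          - lam / 8 * l2norm (projT U V *ᵥ h) - l2norm Λ * l2norm (h + k)) ≤
      μ * frob Z := by
  set L := U * diagonal s * Vᵀ
  set S := toMat (signVec b ε * a)
  have hopt := hmin L S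
  have hfit : L + toMat h + (S + toMat k) - (L + S + Z) = toMat (h + k) - Z := by
    rw [map_add]
    abel
  rw [hfit, sub_add_cancel_left, frob_neg] at hopt
  have hres := mul_le_mul_of_nonneg_left (l2norm_sub_frob_le (h + k) Z) hμ
  linarith [hΛ.objective_gap_le hU hV hs ha hl h k]

end IsCert

lemma five_mul_add_le_of_objective_gap {A B C g z l q s lam μ : ℝ} (hA : 0 ≤ A) (hB : 0 ≤ B)
    (hz : 0 ≤ z) (hq : 1 ≤ q) (hs : 10 ≤ s) (hlam : lam * s = 1) (hg : g ≤ 2 * (A + B + C))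
    (hl : l ≤ 6 / 10 * q + lam / 8) (hμ : 7 / 10 * q ≤ μ) (hμ' : μ ≤ 71 / 100 * q)
    (hgap : μ * (A - z) + (1 / 2 * B + lam / 2 * C - lam / 8 * g - l * A) ≤ μ * z) :
    5 * A + 6 * B + 4 * C ≤ 560 * (s * q) * z := by
  have hlam0 : 0 < lam := by
    by_contra! h
    linarith [mul_nonpos_of_nonpos_of_nonneg h (show 0 ≤ s by linarith)]
  have hlam1 : lam ≤ 1 / 10 := by linarith [mul_le_mul_of_nonneg_left hs hlam0.le]
  have hmain : 6 / 100 * q * A + 1 / 4 * B + lam / 4 * C ≤ 142 / 100 * q * z := by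
    have hlA := mul_le_mul_of_nonneg_right hl hA
    have hμA := mul_le_mul_of_nonneg_right hμ hA
    have hμz := mul_le_mul_of_nonneg_right hμ' hz
    have hlg := mul_le_mul_of_nonneg_left hg (show 0 ≤ lam / 8 by positivity)
    have hlamA := mul_le_mul_of_nonneg_right hlam1 hA
    have hlamB := mul_le_mul_of_nonneg_right hlam1 hB
    have hqA := mul_le_mul_of_nonneg_right hq hA
    linarith
  have hscaled := mul_le_mul_of_nonneg_left hmain (show 0 ≤ 16 * s by linarith)
  have hC : 16 * s * (lam / 4 * C) = 4 * C := by linear_combination 4 * C * hlam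
  have hsqA : 10 * A ≤ s * q * A :=
    mul_le_mul_of_nonneg_right (by nlinarith) hA
  have hsB := mul_le_mul_of_nonneg_right hs hB
  have hsqz : 0 ≤ s * q * z := by positivity
  linarith

/-- With `A = ‖h + k‖`, `B = ‖h - P_T h‖` and `C = ‖k - P_Ω k‖`, optimality controls `A`, `B` and
`C`, and transversality then controls `h` and `k`. -/
theorem pairDist_le_of_isCert (hU : Uᵀ * U = 1) (hV : Vᵀ * V = 1) (hn1 : 100 ≤ n1) (hn2 : 0 < n2)
    {s : Fin r → ℝ} (hs : ∀ k, 0 ≤ s k) {a : Fin n1 × Fin n2 → ℝ} (ha : ∀ p, 0 ≤ a p)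
    {b ε : Fin n1 × Fin n2 → Bool} (huv : l2norm (toMat.symm (U * Vᵀ)) ≤ 1 / 10 * √n2)
    {Λ : Fin n1 × Fin n2 → ℝ} (hΛ : IsCert U V b ε (√n1)⁻¹ Λ)
    {Z Lh Sh : Matrix (Fin n1) (Fin n2) ℝ}
    (hmin : IsRootPCPMin (U * diagonal s * Vᵀ + toMat (signVec b ε * a) + Z) (√n1)⁻¹
      (√((n2 : ℝ) / 2)) Lh Sh) :
    pairDist Lh Sh (U * diagonal s * Vᵀ) (toMat (signVec b ε * a)) ≤
      560 * √((n1 : ℝ) * n2) * frob Z := by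
  have hn1' : (10 : ℝ) ≤ √n1 := Real.le_sqrt_of_sq_le (by norm_num; exact_mod_cast hn1)
  have hn2' : (1 : ℝ) ≤ √n2 := Real.one_le_sqrt.2 (by exact_mod_cast hn2)
  have hsq : √(n2 : ℝ) ^ 2 = n2 := Real.sq_sqrt (Nat.cast_nonneg _)
  set L := U * diagonal s * Vᵀ
  set S := toMat (signVec b ε * a)
  obtain ⟨h, hh⟩ := toMat.surjective (Lh - L)
  obtain ⟨k, hk⟩ := toMat.surjective (Sh - S)
  have hLh : Lh = L + toMat h := by rw [hh, add_sub_cancel]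
  have hSh : Sh = S + toMat k := by rw [hk, add_sub_cancel]
  rw [hLh, hSh] at hmin
  have hgap := hΛ.gap_le_of_isRootPCPMin hU hV hs ha (by positivity) (by positivity) hmin
  have htrans := l2norm_proj_mulVec_le_of_norm_mul_le_half (isStarProjection_coordProj b)
    (isStarProjection_projT hU hV) hΛ.transversal h k
  have hbound := five_mul_add_le_of_objective_gap (l2norm_nonneg _) (l2norm_nonneg _)
    (frob_nonneg Z) hn2' hn1' (inv_mul_cancel₀ (by positivity)) htrans
    (by linarith [hΛ.l2norm_le]) (Real.le_sqrt_of_sq_le (by linarith))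
    (Real.sqrt_le_iff.2 ⟨by positivity, by linarith⟩) hgap
  have hh_le := l2norm_add_le (projT U V *ᵥ h) (h - projT U V *ᵥ h)
  rw [add_sub_cancel] at hh_le
  have hk_le := l2norm_sub_le (h + k) h
  rw [add_sub_cancel_left] at hk_le
  have hdist := pairDist_le_add Lh Sh L S
  rw [← hh, ← hk, frob_eq_l2norm, frob_eq_l2norm, LinearEquiv.symm_apply_apply,
    LinearEquiv.symm_apply_apply] at hdist
  rw [Real.sqrt_mul (Nat.cast_nonneg _)]
  linarith

end Deterministic

/-! ### Comparison with a Bernoulli support -/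

lemma choose_mul_pow_succ_le {N m j : ℕ} (hmj : m ≤ j) (hj : j < N) :
    N.choose (j + 1) * (m ^ (j + 1) * (N - m) ^ (N - (j + 1))) ≤
      N.choose j * (m ^ j * (N - m) ^ (N - j)) := by
  have hchoose := Nat.choose_succ_right_eq N j
  have hsub : N - j = N - (j + 1) + 1 := by omega
  refine le_of_mul_le_mul_right (a := j + 1) ?_ (Nat.succ_pos j)
  calc N.choose (j + 1) * (m ^ (j + 1) * (N - m) ^ (N - (j + 1))) * (j + 1)
      = (N.choose (j + 1) * (j + 1)) * (m ^ j * (N - m) ^ (N - (j + 1))) * m := by ring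
    _ = N.choose j * (m ^ j * (N - m) ^ (N - (j + 1))) * ((N - j) * m) := by rw [hchoose]; ring
    _ ≤ N.choose j * (m ^ j * (N - m) ^ (N - (j + 1))) * ((N - m) * (j + 1)) :=
        Nat.mul_le_mul_left _ (Nat.mul_le_mul (by omega) (by omega))
    _ = N.choose j * (m ^ j * (N - m) ^ (N - j)) * (j + 1) := by rw [hsub, pow_succ]; ring

/-- The number `m` is a mode of the binomial distribution with parameters `N` and `m / N`. -/
lemma choose_mul_pow_le {N m j : ℕ} (hm : m ≤ N) (hj : j ≤ N) :
    N.choose j * (m ^ j * (N - m) ^ (N - j)) ≤ N.choose m * (m ^ m * (N - m) ^ (N - m)) := by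
  have of_le : ∀ {m j : ℕ}, m ≤ j → j ≤ N →
      N.choose j * (m ^ j * (N - m) ^ (N - j)) ≤ N.choose m * (m ^ m * (N - m) ^ (N - m)) := by
    intro m j hmj
    induction j, hmj using Nat.le_induction with
    | base => exact fun _ => le_rfl
    | succ j hmj ih => exact fun hj => (choose_mul_pow_succ_le hmj hj).trans (ih (by omega))
  rcases le_total m j with h | h
  · exact of_le h hj
  · have hsymm := of_le (m := N - m) (j := N - j) (by omega) (by omega)
    rw [Nat.choose_symm hj, Nat.choose_symm hm, Nat.sub_sub_self hm, Nat.sub_sub_self hj] at hsymm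
    rwa [mul_comm (m ^ j), mul_comm (m ^ m)]

lemma pow_le_succ_mul_choose_mul_pow {N m : ℕ} (hm : m ≤ N) :
    N ^ N ≤ (N + 1) * (N.choose m * (m ^ m * (N - m) ^ (N - m))) := by
  have hbinom := add_pow m (N - m) N
  rw [Nat.add_sub_cancel' hm] at hbinom
  rw [hbinom]
  refine (Finset.sum_le_card_nsmul _ _ (N.choose m * (m ^ m * (N - m) ^ (N - m)))
    fun j hj => ?_).trans (by simp)
  rw [Nat.cast_id, mul_comm]
  exact choose_mul_pow_le hm (Nat.lt_succ_iff.1 (Finset.mem_range.1 hj))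

lemma one_le_succ_mul_choose_mul_pow {N m : ℕ} (hN : 0 < N) (hm : m ≤ N) :
    1 ≤ ((N : ℝ) + 1) * (N.choose m * (((m : ℝ) / N) ^ m * (1 - (m : ℝ) / N) ^ (N - m))) := by
  have hpow : ((N ^ N : ℕ) : ℝ) ≤
      ((N + 1) * (N.choose m * (m ^ m * (N - m) ^ (N - m))) : ℕ) := by
    exact_mod_cast pow_le_succ_mul_choose_mul_pow hm
  push_cast [Nat.cast_sub hm] at hpow
  have hN' : (0 : ℝ) < N := by exact_mod_cast hN
  have hdiv : ((m : ℝ) / N) ^ m * (1 - (m : ℝ) / N) ^ (N - m) =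
      ((m : ℝ) ^ m * ((N : ℝ) - m) ^ (N - m)) / (N : ℝ) ^ N := by
    rw [one_sub_div hN'.ne', div_pow, div_pow, div_mul_div_comm, ← pow_add,
      Nat.add_sub_cancel' hm]
  rwa [hdiv, ← mul_div_assoc, ← mul_div_assoc, one_le_div (by positivity)]

section Bernoulli

variable {ι : Type*} [Fintype ι]

lemma bernoulliPi_real_singleton (p : I) (b : ι → Bool) :
    (bernoulliPi ι p).real {b} = ∏ e, if b e then (p : ℝ) else 1 - p := by
  rw [measureReal_def, Measure.pi_singleton, ENNReal.toReal_prod]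
  refine Finset.prod_congr rfl fun e _ => ?_
  rw [← measureReal_def]
  cases b e <;> simp

lemma bernoulliPi_real_singleton_decide_mem [DecidableEq ι] (p : I) (s : Finset ι) :
    (bernoulliPi ι p).real {fun e => decide (e ∈ s)} =
      (p : ℝ) ^ s.card * (1 - p) ^ (Fintype.card ι - s.card) := by
  simp only [bernoulliPi_real_singleton, decide_eq_true_eq]
  rw [Finset.prod_ite, Finset.prod_const, Finset.prod_const, Finset.filter_not,
    Finset.filter_mem_eq_inter, Finset.univ_inter,
    Finset.card_sdiff_of_subset (Finset.subset_univ _), Finset.card_univ]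

lemma bernoulliPi_half_real_singleton (b : ι → Bool) :
    (bernoulliPi ι half).real {b} = (1 / 2 : ℝ) ^ Fintype.card ι := by
  have hhalf : (1 : ℝ) - 1 / 2 = 1 / 2 := by norm_num
  simp only [bernoulliPi_real_singleton, coe_half, hhalf, ite_self, Finset.prod_const,
    Finset.card_univ]

end Bernoulli

section UnifProb

variable {α : Type*} [Fintype α]

lemma unifProb_nonneg (E : α → Prop) : 0 ≤ unifProb E := by
  unfold unifProb
  positivity

lemma unifProb_mono {E F : α → Prop} (h : ∀ a, E a → F a) : unifProb E ≤ unifProb F := by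
  unfold unifProb
  gcongr
  exact h _

lemma unifProb_not [Nonempty α] (E : α → Prop) : unifProb (fun a => ¬ E a) = 1 - unifProb E := by
  classical
  have hcard := Finset.card_filter_add_card_filter_not (s := (Finset.univ : Finset α)) E
  rw [eq_sub_iff_add_eq, unifProb, unifProb, ← add_div, div_eq_one_iff_eq (by simp)]
  rw [← Finset.card_univ, ← hcard]
  push_cast
  rw [add_comm]
  congr!

lemma unifProb_le_mul_measureReal [Nonempty α] {β : Type*} [Finite β] [MeasurableSpace β]
    [MeasurableSingletonClass β] {μ : Measure β} [IsFiniteMeasure μ] {φ : α → β}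
    (hφ : Function.Injective φ) {w K : ℝ} (hw : ∀ a, μ.real {φ a} = w)
    (hK : 1 ≤ K * (Fintype.card α * w)) (E : Set β) :
    unifProb (fun a => φ a ∈ E) ≤ K * μ.real E := by
  classical
  obtain ⟨a₀⟩ := ‹Nonempty α›
  have hcard : (0 : ℝ) < Fintype.card α := by exact_mod_cast Fintype.card_pos_iff.2 ⟨a₀⟩
  have hw0 : 0 ≤ w := hw a₀ ▸ measureReal_nonneg
  have hK0 : 0 ≤ K := by
    by_contra! hneg
    nlinarith [mul_nonneg hcard.le hw0]
  set bad : Finset α := {a | φ a ∈ E}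
  have hmass : bad.card * w ≤ μ.real E := by
    calc bad.card * w = ∑ y ∈ bad.image φ, μ.real {y} := by
          rw [Finset.sum_image hφ.injOn, Finset.sum_congr rfl fun a _ => hw a, Finset.sum_const,
            nsmul_eq_mul]
      _ = μ.real (bad.image φ) := sum_measureReal_singleton _
      _ ≤ μ.real E := measureReal_mono fun y hy => by
          obtain ⟨a, ha, rfl⟩ := Finset.mem_image.1 (Finset.mem_coe.1 hy)
          exact (Finset.mem_filter.1 ha).2
  have hunif : unifProb (fun a => φ a ∈ E) = bad.card / Fintype.card α := by
    unfold unifProb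
    congr!
  rw [hunif, div_le_iff₀ hcard]
  calc (bad.card : ℝ) ≤ bad.card * (K * (Fintype.card α * w)) :=
        le_mul_of_one_le_right (Nat.cast_nonneg _) hK
    _ = K * (bad.card * w) * Fintype.card α := by ring
    _ ≤ K * μ.real E * Fintype.card α := by gcongr

end UnifProb

section Sampling

variable {n1 n2 m : ℕ}

/-- The indicator of the support and the signs of a sample. -/
def sampleBits (ω : SampleSpace n1 n2 m) :
    (Fin n1 × Fin n2 → Bool) × (Fin n1 × Fin n2 → Bool) :=
  (fun e => decide (e ∈ ω.1.1), ω.2)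

lemma sampleBits_injective : Function.Injective (sampleBits : SampleSpace n1 n2 m → _) := by
  rintro ⟨⟨s, hs⟩, ε⟩ ⟨⟨t, ht⟩, ε'⟩ h
  obtain ⟨hst, rfl⟩ := Prod.mk.inj h
  obtain rfl : s = t := Finset.ext fun e => by simpa using congrFun hst e
  rfl

lemma sparseOf_eq (a : Fin n1 × Fin n2 → ℝ) (ω : SampleSpace n1 n2 m) :
    sparseOf a ω = toMat (signVec (sampleBits ω).1 (sampleBits ω).2 * a) := by
  ext i j
  by_cases h : (i, j) ∈ ω.1.1 <;> cases hε : ω.2 (i, j) <;>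
    simp [sparseOf, toMat_apply, signVec, sampleBits, sgn, h, hε]

lemma one_sub_le_unifProb (hN : 0 < n1 * n2) {p : I} (hp : (p : ℝ) = m / (n1 * n2 : ℕ))
    (E : Set ((Fin n1 × Fin n2 → Bool) × (Fin n1 × Fin n2 → Bool))) :
    1 - ((n1 * n2 : ℕ) + 1) *
        ((bernoulliPi (Fin n1 × Fin n2) p).prod (bernoulliPi (Fin n1 × Fin n2) half)).real Eᶜ ≤
      unifProb fun ω : SampleSpace n1 n2 m => sampleBits ω ∈ E := by
  set N := n1 * n2 with hNdef
  have hN' : (0 : ℝ) < N := by exact_mod_cast hN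
  have hm : m ≤ N := by
    have h := p.2.2
    rw [hp, div_le_one hN'] at h
    exact_mod_cast h
  have hcardι : Fintype.card (Fin n1 × Fin n2) = N := by simp [hNdef]
  have hcard : (Fintype.card (SampleSpace n1 n2 m) : ℝ) = N.choose m * 2 ^ N := by
    rw [Fintype.card_prod, Fintype.card_finset_len, Fintype.card_fun, hcardι]
    simp
  have : Nonempty (SampleSpace n1 n2 m) := by
    rw [← Fintype.card_pos_iff, Fintype.card_prod, Fintype.card_finset_len, hcardι]
    exact Nat.mul_pos (Nat.choose_pos hm) Fintype.card_pos
  have hle := unifProb_le_mul_measureReal (sampleBits_injective (m := m))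
    (μ := (bernoulliPi (Fin n1 × Fin n2) p).prod (bernoulliPi (Fin n1 × Fin n2) half))
    (w := (p : ℝ) ^ m * (1 - p) ^ (N - m) * (1 / 2) ^ N) (K := N + 1) (fun ω => ?_) ?_ Eᶜ
  · have hnot := unifProb_not fun ω : SampleSpace n1 n2 m => sampleBits ω ∈ E
    simp only [Set.mem_compl_iff] at hle
    linarith
  · rw [sampleBits, ← Set.singleton_prod_singleton, measureReal_prod_prod,
      bernoulliPi_real_singleton_decide_mem, bernoulliPi_half_real_singleton, ω.1.2, hcardι]
  · refine (one_le_succ_mul_choose_mul_pow hN hm).trans_eq ?_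
    have htwo : (2 : ℝ) ^ N * (1 / 2) ^ N = 1 := by rw [← mul_pow]; norm_num
    rw [hcard, hp]
    linear_combination
      (-((N : ℝ) + 1) * N.choose m * (m / N) ^ m * (1 - m / N) ^ (N - m)) * htwo

end Sampling

/-! ### Existence of a dual certificate -/

lemma l2norm_le_sqrt_card_mul {ι : Type*} [Fintype ι] {v : ι → ℝ} {c : ℝ} (hc : 0 ≤ c)
    (h : ∀ e, |v e| ≤ c) : l2norm v ≤ √(Fintype.card ι) * c := by
  rw [l2norm_eq_sqrt]
  refine Real.sqrt_le_iff.2 ⟨by positivity, ?_⟩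
  rw [mul_pow, Real.sq_sqrt (Nat.cast_nonneg _), ← nsmul_eq_mul, ← Finset.card_univ]
  exact Finset.sum_le_card_nsmul _ _ _ fun e _ => sq_le_sq' (abs_le.1 (h e)).1 (abs_le.1 (h e)).2

section Certificate

variable {n1 n2 r : ℕ} {U : Matrix (Fin n1) (Fin r) ℝ} {V : Matrix (Fin n2) (Fin r) ℝ} {M : ℝ}

lemma isCert_add_smul {b ε : Fin n1 × Fin n2 → Bool} {lam δ : ℝ} (hlam : 0 ≤ lam)
    {Y h : Fin n1 × Fin n2 → ℝ} (hY : ∀ p, b p = true → Y p = 0) (hYle : ∀ p, |Y p| ≤ lam / 4)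
    (hYtan : l2norm (projT U V *ᵥ Y - toMat.symm (U * Vᵀ)) ≤ lam / 8)
    (hYnorm : ‖toMat (Y - projT U V *ᵥ Y)‖ ≤ 1 / 4)
    (hh : ∀ p, b p = true → h p = 0) (hhle : ∀ p, |h p| ≤ 1 / 4)
    (hG : projT U V *ᵥ (signVec b ε + h) = 0) (hsign : lam * ‖toMat (signVec b ε)‖ ≤ δ)
    (hhnorm : lam * ‖toMat h‖ ≤ 1 / 4 - δ) (hb : ‖coordProj b * projT U V‖ ≤ 1 / 2) :
    IsCert U V b ε lam (Y + lam • (signVec b ε + h)) := by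
  have htan : projT U V *ᵥ (Y + lam • (signVec b ε + h)) = projT U V *ᵥ Y := by
    rw [mulVec_add, mulVec_smul, hG, smul_zero, add_zero]
  refine ⟨fun p hp => by simp [hY p hp, hh p hp, signVec, hp], fun p hp => ?_, htan ▸ hYtan, ?_, hb⟩
  · have hval : (Y + lam • (signVec b ε + h)) p = Y p + lam * h p := by simp [signVec, hp]
    have hlamh := mul_le_mul_of_nonneg_left (hhle p) hlam
    rw [← abs_of_nonneg hlam, ← abs_mul, abs_of_nonneg hlam] at hlamh
    rw [hval]
    linarith [abs_add_le (Y p) (lam * h p), hYle p]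
  · rw [htan, add_sub_right_comm, map_add, map_smul, map_add]
    have hnorm : ‖lam • (toMat (signVec b ε) + toMat h)‖ ≤
        lam * (‖toMat (signVec b ε)‖ + ‖toMat h‖) := by
      rw [norm_smul, Real.norm_of_nonneg hlam]
      gcongr
      exact norm_add_le _ _
    linarith [norm_add_le (toMat (Y - projT U V *ᵥ Y)) (lam • (toMat (signVec b ε) + toMat h))]

lemma exists_isCert {b ε : Fin n1 × Fin n2 → Bool} {q : ℝ} {k : ℕ} (hn1 : 0 < n1)
    (hq : 0 < q) (hM : 0 ≤ M) (hMq : 128 * (M * √n1) ≤ q)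
    (hk : √((n1 : ℝ) * n2) * ((1 / 2) ^ k * M) ≤ (√n1)⁻¹ / 8)
    (hgolf : IsGolfed (projT U V) q M (toMat.symm (U * Vᵀ)) k b)
    (hsign : IsSignCorrectable (projT U V) (1 / 256) b ε)
    (hnorm : ‖toMat (signVec b ε)‖ ≤ 1 / 8 * √n1) (hb : ‖coordProj b * projT U V‖ ≤ 1 / 2) :
    ∃ Λ, IsCert U V b ε (√n1)⁻¹ Λ := by
  obtain ⟨Y, hY, hYle, hYtan, hYnorm⟩ := hgolf
  obtain ⟨h, hh, hhle, hhnorm, hG⟩ := hsign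
  simp only [Fintype.card_fin] at hYnorm hhnorm
  have hn : (0 : ℝ) < √n1 := Real.sqrt_pos.2 (by exact_mod_cast hn1)
  have hk1 : 1 - (1 / 2 : ℝ) ^ k ≤ 1 := sub_le_self _ (by positivity)
  have hMq' : M / q * √n1 ≤ 1 / 128 := by
    rw [div_mul_eq_mul_div, div_le_iff₀ hq]
    linarith
  refine ⟨_, isCert_add_smul (δ := 1 / 8) (inv_nonneg.2 hn.le) hY (fun p => ?_) ?_ ?_ hh hhle hG
    ?_ ?_ hb⟩
  · refine (hYle p).trans ((mul_le_of_le_one_right (by positivity) hk1).trans ?_)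
    rw [mul_div_assoc, inv_eq_one_div, div_div, le_div_iff₀ (by positivity)]
    linarith
  · rw [← l2norm_neg, neg_sub]
    refine (l2norm_le_sqrt_card_mul (by positivity) hYtan).trans (le_of_eq_of_le ?_ hk)
    simp
  · refine hYnorm.trans ((mul_le_of_le_one_right (by positivity) hk1).trans ?_)
    linarith
  · rw [inv_mul_le_iff₀ hn]
    linarith
  · rw [inv_mul_le_iff₀ hn]
    linarith

/-- The four terms bound the failures of the golfing scheme, of the transversality of the tangent
space and the support, of the sign correction, and of the spectral bound on the signs. -/
lemma measureReal_not_exists_isCert_le {μ₀ : ℝ} {q : I} {k j : ℕ} (hn1 : 0 < n1) (hn : n2 ≤ n1)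
    (hU : Uᵀ * U = 1) (hV : Vᵀ * V = 1) (hμ0 : 0 < μ₀) (hμ1 : μ₀ ≤ 1)
    (hμ : ∀ e, projT U V e e ≤ μ₀) (hM : 0 < M) (huv : ∀ e, |toMat.symm (U * Vᵀ) e| ≤ M)
    (hq : 0 < (q : ℝ)) (hMq : 128 * (M * √n1) ≤ q)
    (hk : √((n1 : ℝ) * n2) * ((1 / 2) ^ k * M) ≤ (√n1)⁻¹ / 8)
    (hsub : HasSubgaussianMGF (fun x : Bool × Bool => if x.1 then sgn x.2 else 0) ((1 / 128) ^ 2)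
      ((bernoulliMeasure true false (σ q ^ k)).prod (bernoulliMeasure true false half)))
    (hqk : ((σ q ^ k : I) : ℝ) ≤ (1 / 2) ^ 17) (hj : j ≠ 0) :
    ((bernoulliPi (Fin n1 × Fin n2) (σ q ^ k)).prod (bernoulliPi (Fin n1 × Fin n2) half)).real
        {z | ¬ ∃ Λ, IsCert U V z.1 z.2 (√n1)⁻¹ Λ} ≤
      k * ((n1 * n2 : ℝ) * (2 * Real.exp (-q / (16 * μ₀))) + Real.exp (-4 * n1)) +
        (2 * j * μ₀ / ((1 / 2) ^ 17) ^ 2) ^ j * (n1 * n2 : ℝ) +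
        ((n1 * n2 : ℝ) * (2 * Real.exp (-1 / (128 * μ₀))) + Real.exp (-4 * n1)) +
        Real.exp (-4 * n1) := by
  have hG := isStarProjection_projT hU hV
  have hcard : Fintype.card (Fin n2) ≤ Fintype.card (Fin n1) := by simpa using hn
  set G := projT U V
  let golfFail := {b | ¬ IsGolfed G q M (toMat.symm (U * Vᵀ)) k b}
  let meetFail := {b | (1 / 2) ^ 17 + ((σ q ^ k : I) : ℝ) < ‖coordProj b * G‖ ^ 2}
  let signFail := {z : (Fin n1 × Fin n2 → Bool) × (Fin n1 × Fin n2 → Bool) |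
    z.1 ∈ golfFail ∪ meetFail ∨ ¬ IsSignCorrectable G (1 / 256) z.1 z.2}
  let normFail := {z : (Fin n1 × Fin n2 → Bool) × (Fin n1 × Fin n2 → Bool) |
    16 * (((1 / 128 : NNReal) : ℝ) * √(Fintype.card (Fin n1))) < ‖toMat (signVec z.1 z.2)‖}
  have hmeet : ∀ b ∉ meetFail, ‖coordProj b * G‖ ≤ 1 / 256 := fun b hb =>
    le_of_sq_le_sq ((not_lt.1 hb).trans (by norm_num at hqk ⊢; linarith)) (by norm_num)
  have hcover : {z | ¬ ∃ Λ, IsCert U V z.1 z.2 (√n1)⁻¹ Λ} ⊆ signFail ∪ normFail := by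
    intro z
    contrapose
    intro hz hcert
    simp only [signFail, normFail, golfFail, Set.mem_union, Set.mem_ofPred_eq, not_or, not_not,
      not_lt, Fintype.card_fin] at hz
    obtain ⟨⟨⟨hgolf, hzmeet⟩, hsign⟩, hnorm⟩ := hz
    refine hcert (exists_isCert hn1 hq hM.le hMq hk hgolf hsign (hnorm.trans_eq ?_)
      ((hmeet _ hzmeet).trans (by norm_num)))
    norm_num
    ring
  have hgolfFail : (bernoulliPi _ (σ q ^ k)).real golfFail ≤ _ :=
    measureReal_not_isGolfed_le hcard hG hμ0 hμ (norm_toMat_sub_projT_mulVec_le hU hV) hq k hM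
      (projT_mulVec_toMat_symm hU hV) huv
  have hmeetFail : (bernoulliPi _ (σ q ^ k)).real meetFail ≤ _ :=
    measureReal_lt_norm_coordProj_mul_sq_le hG (σ q ^ k) hμ0.le hμ hμ1 (by norm_num) hj
  have hsignFail := measureReal_prod_le_add (μ := bernoulliPi (Fin n1 × Fin n2) (σ q ^ k))
    (B := golfFail ∪ meetFail) (E := signFail) (by positivity) fun b hb =>
      (measureReal_mono fun ε (hε : (b, ε) ∈ signFail) => hε.resolve_left hb).trans
        (measureReal_not_isSignCorrectable_le hcard hG hμ0 hμ (by norm_num) (by norm_num)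
          (hmeet b fun h => hb (Or.inr h)))
  have hnormFail : ((bernoulliPi _ (σ q ^ k)).prod (bernoulliPi _ half)).real normFail ≤ _ :=
    measureReal_lt_norm_toMat_signVec_le hcard (by norm_num) hsub
  simp only [Fintype.card_prod, Fintype.card_fin, Nat.cast_mul] at hgolfFail hmeetFail hsignFail
  rw [Fintype.card_fin] at hnormFail
  refine ((measureReal_mono hcover).trans (measureReal_union_le signFail normFail)).trans
    (add_le_add (hsignFail.trans ?_) hnormFail)
  gcongr
  exact (measureReal_union_le golfFail meetFail).trans (add_le_add hgolfFail hmeetFail)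

end Certificate

/-! ### Choice of parameters -/

lemma exists_symm_pow_eq {ρ : I} {k : ℕ} (hρ : (ρ : ℝ) ≤ 1 / 2) (hk : 0 < k) :
    ∃ q : I, 1 / (2 * k) ≤ (q : ℝ) ∧ σ q ^ k = ρ := by
  have hk1 : (1 : ℝ) ≤ k := by exact_mod_cast hk
  have hroot0 : 0 ≤ (ρ : ℝ) ^ (k : ℝ)⁻¹ := Real.rpow_nonneg ρ.2.1 _
  have hroot1 : (ρ : ℝ) ^ (k : ℝ)⁻¹ ≤ 1 := Real.rpow_le_one ρ.2.1 ρ.2.2 (by positivity)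
  have hpow : ((ρ : ℝ) ^ (k : ℝ)⁻¹) ^ k = ρ := Real.rpow_inv_natCast_pow ρ.2.1 hk.ne'
  refine ⟨σ ⟨_, hroot0, hroot1⟩, ?_, by rw [symm_symm]; exact Subtype.ext hpow⟩
  have hsmall : 1 / (2 * (k : ℝ)) ≤ 1 := (div_le_one (by positivity)).2 (by linarith)
  have hbernoulli := one_add_mul_le_pow (a := -(1 / (2 * (k : ℝ)))) (by linarith) k
  have hhalf : 1 + (k : ℝ) * -(1 / (2 * k)) = 1 / 2 := by field_simp; norm_num
  have hle := le_of_pow_le_pow_left₀ hk.ne' (by linarith)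
    (hpow.trans_le (hρ.trans (hhalf.symm.trans_le hbernoulli)))
  rw [coe_symm_eq]
  linarith

section Logarithm

variable {n ℓ : ℝ}

lemma one_le_log (hn : 100 ≤ n) : 1 ≤ Real.log n := by
  rw [Real.le_log_iff_exp_le (by linarith)]
  linarith [Real.exp_one_lt_d9]

lemma log_le_div_four_add_one (hn : 0 < n) : Real.log n ≤ n / 4 + 1 := by
  have hlog4 : Real.log 4 ≤ 2 := by
    have h : Real.log 4 = 2 * Real.log 2 := by
      rw [← Real.log_rpow two_pos]
      norm_num
    linarith [Real.log_two_lt_d9]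
  have h := Real.log_le_sub_one_of_pos (x := n / 4) (by positivity)
  rw [Real.log_div hn.ne' (by norm_num)] at h
  linarith

lemma exp_neg_mul_log (hn : 0 < n) (d : ℕ) : Real.exp (-(d * Real.log n)) = (n ^ d)⁻¹ := by
  rw [Real.exp_neg, ← Real.log_pow, Real.exp_log (by positivity)]

lemma half_pow_ceil_log_le (hn : 100 ≤ n) :
    (1 / 2 : ℝ) ^ ⌈4 * Real.log n⌉₊ ≤ (n ^ 2)⁻¹ := by
  have hhalf : (1 / 2 : ℝ) = Real.exp (-Real.log 2) := by
    rw [Real.exp_neg, Real.exp_log two_pos, one_div]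
  rw [hhalf, ← Real.exp_nat_mul, ← exp_neg_mul_log (by linarith), Real.exp_le_exp]
  have hceil := mul_le_mul_of_nonneg_right (Nat.le_ceil (4 * Real.log n))
    (Real.log_nonneg one_le_two)
  have hlog := mul_le_mul_of_nonneg_left Real.log_two_gt_d9.le
    (zero_le_one.trans (one_le_log hn))
  push_cast
  linarith [one_le_log hn]

lemma exp_neg_div_le {q : ℝ} (hℓ : 1 ≤ ℓ) (hq : 1 / (10 * ℓ) ≤ q) :
    Real.exp (-q / (16 * ((1 / 2) ^ 41 / ℓ ^ 2))) ≤ Real.exp (-(15 * ℓ)) := by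
  rw [Real.exp_le_exp, neg_div, neg_le_neg_iff, le_div_iff₀ (by positivity)]
  refine le_trans ?_ hq
  rw [le_div_iff₀ (by positivity)]
  field_simp
  norm_num

lemma exp_neg_one_div_le (hℓ : 1 ≤ ℓ) :
    Real.exp (-1 / (128 * ((1 / 2) ^ 41 / ℓ ^ 2))) ≤ Real.exp (-(15 * ℓ)) := by
  rw [Real.exp_le_exp, neg_div, neg_le_neg_iff, le_div_iff₀ (by positivity)]
  calc 15 * ℓ * (128 * ((1 / 2) ^ 41 / ℓ ^ 2)) = 15 * 128 * (1 / 2) ^ 41 / ℓ := by field_simp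
    _ ≤ 15 * 128 * (1 / 2) ^ 41 := div_le_self (by positivity) hℓ
    _ ≤ 1 := by norm_num

lemma moment_bound_le (hℓ : 1 ≤ ℓ) :
    (2 * (⌈15 * ℓ⌉₊ : ℝ) * ((1 / 2) ^ 41 / ℓ ^ 2) / ((1 / 2) ^ 17) ^ 2) ^ ⌈15 * ℓ⌉₊ ≤
      Real.exp (-(15 * ℓ)) := by
  have hceil : (⌈15 * ℓ⌉₊ : ℝ) ≤ 16 * ℓ := by
    linarith [(Nat.ceil_lt_add_one (a := 15 * ℓ) (by linarith)).le]
  have hbase : 2 * (⌈15 * ℓ⌉₊ : ℝ) * ((1 / 2) ^ 41 / ℓ ^ 2) / ((1 / 2) ^ 17) ^ 2 ≤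
      Real.exp (-1) := by
    calc 2 * (⌈15 * ℓ⌉₊ : ℝ) * ((1 / 2) ^ 41 / ℓ ^ 2) / ((1 / 2) ^ 17) ^ 2
        ≤ 2 * (16 * ℓ) * ((1 / 2) ^ 41 / ℓ ^ 2) / ((1 / 2) ^ 17) ^ 2 := by gcongr
      _ = 1 / 4 / ℓ := by field_simp; norm_num
      _ ≤ 1 / 4 := div_le_self (by norm_num) hℓ
      _ ≤ Real.exp (-1) := by linarith [Real.exp_neg_one_gt_d9]
  refine (pow_le_pow_left₀ (by positivity) hbase _).trans ?_
  rw [← Real.exp_nat_mul, Real.exp_le_exp]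
  linarith [Nat.le_ceil (15 * ℓ)]

lemma failure_bound_le {n' q : ℝ} (hn : 100 ≤ n) (hn0 : 0 ≤ n') (hn' : n' ≤ n)
    (hℓ : ℓ = Real.log n) (hq : 1 / (10 * ℓ) ≤ q) :
    ⌈4 * ℓ⌉₊ * (n * n' * (2 * Real.exp (-q / (16 * ((1 / 2) ^ 41 / ℓ ^ 2)))) + Real.exp (-4 * n)) +
        (2 * ⌈15 * ℓ⌉₊ * ((1 / 2) ^ 41 / ℓ ^ 2) / ((1 / 2) ^ 17) ^ 2) ^ ⌈15 * ℓ⌉₊ * (n * n') +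
        (n * n' * (2 * Real.exp (-1 / (128 * ((1 / 2) ^ 41 / ℓ ^ 2)))) + Real.exp (-4 * n)) +
        Real.exp (-4 * n) ≤ 30 * (n ^ 12)⁻¹ := by
  have hℓ1 : 1 ≤ ℓ := hℓ ▸ one_le_log hn
  have hlog := hℓ ▸ log_le_div_four_add_one (n := n) (by linarith)
  set t := Real.exp (-(15 * ℓ)) with ht
  have htn : t = (n ^ 15)⁻¹ := by
    rw [← exp_neg_mul_log (by linarith), ht, hℓ]
    norm_num
  have hexp : Real.exp (-4 * n) ≤ t := Real.exp_le_exp.2 (by linarith)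
  have hnn : n * n' ≤ n ^ 2 := by rw [sq]; gcongr
  have hceil : (⌈4 * ℓ⌉₊ : ℝ) ≤ 5 * n := by
    linarith [(Nat.ceil_lt_add_one (a := 4 * ℓ) (by linarith)).le]
  calc _ ≤ 5 * n * (n ^ 2 * (2 * t) + t) + t * n ^ 2 + (n ^ 2 * (2 * t) + t) + t := by
        gcongr
        exacts [exp_neg_div_le hℓ1 hq, moment_bound_le hℓ1, exp_neg_one_div_le hℓ1]
    _ = (10 * n ^ 3 + 5 * n + 3 * n ^ 2 + 2) * t := by ring
    _ ≤ 30 * n ^ 3 * t := by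
        have hn1 : 1 ≤ n := by linarith
        gcongr
        linarith [le_self_pow₀ hn1 three_ne_zero, one_le_pow₀ hn1 (n := 3),
          pow_le_pow_right₀ hn1 (show 2 ≤ 3 by norm_num)]
    _ = 30 * (n ^ 12)⁻¹ := by rw [htn]; field_simp

end Logarithm

/-! ### Incoherent low-rank matrices -/

section Incoherence

variable {n1 n2 r : ℕ} {U : Matrix (Fin n1) (Fin r) ℝ} {V : Matrix (Fin n2) (Fin r) ℝ}

/-- The `ν`-incoherence of `L₀ = U Σ Vᵀ`, with `x` in the role of `ν r`. -/
structure IsIncoherent (U : Matrix (Fin n1) (Fin r) ℝ) (V : Matrix (Fin n2) (Fin r) ℝ) (x : ℝ) :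
    Prop where
  left_orthonormal : Uᵀ * U = 1
  right_orthonormal : Vᵀ * V = 1
  left_row_le (i : Fin n1) : ∑ k, U i k ^ 2 ≤ x / n1
  right_row_le (j : Fin n2) : ∑ k, V j k ^ 2 ≤ x / n2
  abs_apply_le (i : Fin n1) (j : Fin n2) : |∑ k, U i k * V j k| ≤ √(x / (n1 * n2))

namespace IsIncoherent

variable {x ℓ : ℝ}

lemma projT_apply_self_le (h : IsIncoherent U V x) (hx : 0 ≤ x) (hn2 : 0 < n2) (hn : n2 ≤ n1)
    (e : Fin n1 × Fin n2) : projT U V e e ≤ 2 * (x / n2) := by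
  have hle : x / n1 ≤ x / n2 := by gcongr
  linarith [SqrtPCP.projT_apply_self_le U V e, h.left_row_le e.1, h.right_row_le e.2]

lemma abs_toMat_symm_le_sqrt (h : IsIncoherent U V x) (e : Fin n1 × Fin n2) :
    |toMat.symm (U * Vᵀ) e| ≤ √(x / (n1 * n2)) := by
  rw [toMat_symm_apply, mul_apply]
  exact h.abs_apply_le e.1 e.2

lemma l2norm_toMat_symm_le (h : IsIncoherent U V x) (hn1 : 0 < n1) (hn2 : 0 < n2) :
    l2norm (toMat.symm (U * Vᵀ)) ≤ √x := by
  have hN : (n1 * n2 : ℝ) ≠ 0 := by positivity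
  have hle := l2norm_le_sqrt_card_mul (Real.sqrt_nonneg _) h.abs_toMat_symm_le_sqrt
  rwa [← Real.sqrt_mul (Nat.cast_nonneg _), Fintype.card_prod, Fintype.card_fin, Fintype.card_fin,
    Nat.cast_mul, mul_div_cancel₀ _ hN] at hle

lemma abs_toMat_symm_le (h : IsIncoherent U V x) (hℓ : 0 < ℓ) (hn1 : 0 < n1) (hn2 : 0 < n2)
    (hx : x * ℓ ^ 2 ≤ (1 / 2) ^ 42 * n2) (e : Fin n1 × Fin n2) :
    |toMat.symm (U * Vᵀ) e| ≤ (1 / 2) ^ 21 / (√n1 * ℓ) := by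
  refine (h.abs_toMat_symm_le_sqrt e).trans (Real.sqrt_le_iff.2 ⟨by positivity, ?_⟩)
  rw [div_pow, mul_pow, Real.sq_sqrt (Nat.cast_nonneg _), div_le_div_iff₀ (by positivity)
    (by positivity)]
  calc x * ((n1 : ℝ) * ℓ ^ 2) = x * ℓ ^ 2 * n1 := by ring
    _ ≤ (1 / 2) ^ 42 * (n2 : ℝ) * n1 := by gcongr
    _ = ((1 / 2) ^ 21) ^ 2 * ((n1 : ℝ) * n2) := by ring

end IsIncoherent

end Incoherence

lemma golfing_residual_le {n1 n2 : ℕ} {M : ℝ} (hn1 : 100 ≤ n1) (hn : n2 ≤ n1) (hM0 : 0 ≤ M)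
    (hM1 : M ≤ 1) :
    √((n1 : ℝ) * n2) * ((1 / 2) ^ ⌈4 * Real.log n1⌉₊ * M) ≤ (√n1)⁻¹ / 8 := by
  have hn1' : (100 : ℝ) ≤ n1 := by exact_mod_cast hn1
  have hsqrt : 8 ≤ √(n1 : ℝ) := Real.le_sqrt_of_sq_le (by linarith)
  have hpow := half_pow_ceil_log_le hn1'
  have hdim : √((n1 : ℝ) * n2) ≤ n1 :=
    Real.sqrt_le_iff.2 ⟨Nat.cast_nonneg _, by rw [sq]; gcongr⟩
  calc √((n1 : ℝ) * n2) * ((1 / 2) ^ ⌈4 * Real.log n1⌉₊ * M) ≤ n1 * (((n1 : ℝ) ^ 2)⁻¹ * 1) := by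
        gcongr
    _ = (√n1 * √n1)⁻¹ := by rw [Real.mul_self_sqrt (Nat.cast_nonneg _)]; field_simp
    _ = (√n1)⁻¹ * (√n1)⁻¹ := mul_inv _ _
    _ ≤ (√n1)⁻¹ * 8⁻¹ := by gcongr
    _ = (√n1)⁻¹ / 8 := (div_eq_mul_inv _ _).symm

lemma exists_measureReal_not_exists_isCert_le : ∃ ρs : ℝ, 0 < ρs ∧ ρs ≤ 1 ∧
    ∀ {n1 n2 r : ℕ} {x : ℝ} {ρ : I} {U : Matrix (Fin n1) (Fin r) ℝ}
      {V : Matrix (Fin n2) (Fin r) ℝ}, 100 ≤ n1 → 0 < n2 → n2 ≤ n1 → 0 ≤ x → IsIncoherent U V x →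
      x * Real.log n1 ^ 2 ≤ (1 / 2) ^ 42 * n2 → ρ ≤ ρs →
      ((bernoulliPi (Fin n1 × Fin n2) ρ).prod (bernoulliPi (Fin n1 × Fin n2) half)).real
        {z | ¬ ∃ Λ, IsCert U V z.1 z.2 (√n1)⁻¹ Λ} ≤ 30 * ((n1 : ℝ) ^ 12)⁻¹ := by
  obtain ⟨ρ₀, hρ₀, hsub⟩ := exists_hasSubgaussianMGF_sparse_sgn (κ := (1 / 128) ^ 2) (by norm_num)
  refine ⟨min ρ₀ ((1 / 2) ^ 17), lt_min hρ₀ (by norm_num),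
    (min_le_right _ _).trans (by norm_num), ?_⟩
  intro n1 n2 r x ρ U V hn1 hn2 hn hx h hxℓ hρ
  obtain ⟨hρρ₀, hρ⟩ := le_min_iff.1 hρ
  have hn1' : (100 : ℝ) ≤ n1 := by exact_mod_cast hn1
  set ℓ := Real.log n1 with hℓ
  have hℓ1 : 1 ≤ ℓ := one_le_log hn1'
  have hk : 0 < ⌈4 * ℓ⌉₊ := Nat.ceil_pos.2 (by linarith)
  obtain ⟨q, hq, rfl⟩ := exists_symm_pow_eq (hρ.trans (by norm_num)) hk
  have hqℓ : 1 / (10 * ℓ) ≤ (q : ℝ) := by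
    refine le_trans (one_div_le_one_div_of_le (by positivity) ?_) hq
    linarith [(Nat.ceil_lt_add_one (a := 4 * ℓ) (by linarith)).le]
  have hsqrt : 1 ≤ √(n1 : ℝ) := Real.one_le_sqrt.2 (by linarith)
  have hM1 : (1 / 2) ^ 21 / (√n1 * ℓ) ≤ 1 :=
    div_le_one_of_le₀ ((pow_le_one₀ (by norm_num) (by norm_num)).trans
      (one_le_mul_of_one_le_of_one_le hsqrt hℓ1)) (by positivity)
  refine (measureReal_not_exists_isCert_le (μ₀ := (1 / 2) ^ 41 / ℓ ^ 2) (by omega) hn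
    h.left_orthonormal h.right_orthonormal (by positivity) ?_ (fun e => ?_) (by positivity)
    (h.abs_toMat_symm_le (by positivity) (by omega) hn2 hxℓ) (lt_of_lt_of_le (by positivity) hqℓ) ?_
    (golfing_residual_le hn1 hn (by positivity) hM1) (hsub _ hρρ₀) hρ
    (Nat.ceil_pos.2 (by positivity : 0 < 15 * ℓ)).ne').trans
    (failure_bound_le hn1' (Nat.cast_nonneg _) (by exact_mod_cast hn) hℓ hqℓ)
  · exact div_le_one_of_le₀ (by nlinarith) (by positivity)
  · refine (h.projT_apply_self_le hx hn2 hn e).trans ?_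
    rw [← mul_div_assoc, div_le_div_iff₀ (by positivity) (by positivity)]
    linarith
  · have hℓM : 128 * ((1 / 2) ^ 21 / (√n1 * ℓ) * √n1) = 128 * (1 / 2) ^ 21 / ℓ := by field_simp
    refine (hℓM.trans_le ?_).trans hqℓ
    rw [div_le_div_iff₀ (by positivity) (by positivity)]
    linarith

lemma mul_log_sq_le {n1 n2 ν r ρ : ℝ} (hn1 : 100 ≤ n1) (hν : 0 < ν)
    (hr : r ≤ ρ * n2 * ν⁻¹ * (Real.log n1 ^ 2)⁻¹) : ν * r * Real.log n1 ^ 2 ≤ ρ * n2 := by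
  have hlog := one_le_log hn1
  calc ν * r * Real.log n1 ^ 2
      ≤ ν * (ρ * n2 * ν⁻¹ * (Real.log n1 ^ 2)⁻¹) * Real.log n1 ^ 2 := by gcongr
    _ = ρ * n2 := by field_simp

lemma sqrt_le_of_mul_log_sq_le {n1 n2 x : ℝ} (hn1 : 100 ≤ n1) (hn2 : 0 ≤ n2) (hx : 0 ≤ x)
    (hle : x * Real.log n1 ^ 2 ≤ (1 / 2) ^ 42 * n2) : √x ≤ 1 / 10 * √n2 := by
  have hx' := le_mul_of_one_le_right hx (one_le_pow₀ (one_le_log hn1) (n := 2))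
  refine Real.sqrt_le_iff.2 ⟨by positivity, ?_⟩
  rw [mul_pow, Real.sq_sqrt hn2]
  linarith

lemma one_sub_mul_inv_pow_nonpos {n c C : ℝ} {d : ℕ} (hn : 0 < n) (hnc : n ≤ c)
    (hC : c ^ d ≤ C) : 1 - C * (n ^ d)⁻¹ ≤ 0 := by
  rw [sub_nonpos, ← div_eq_mul_inv, one_le_div (by positivity)]
  exact (pow_le_pow_left₀ hn.le hnc d).trans hC

lemma one_sub_mul_inv_pow_ten_le {n1 n2 : ℕ} {P C : ℝ} (hn1 : 0 < n1) (hn : n2 ≤ n1)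
    (hP : P ≤ 30 * ((n1 : ℝ) ^ 12)⁻¹) (hC : 60 ≤ C) :
    1 - C * ((n1 : ℝ) ^ 10)⁻¹ ≤ 1 - ((n1 * n2 : ℕ) + 1) * P := by
  have hN : ((n1 * n2 : ℕ) + 1 : ℝ) ≤ 2 * (n1 : ℝ) ^ 2 := by
    have : n1 * n2 + 1 ≤ 2 * n1 ^ 2 := by nlinarith
    exact_mod_cast this
  refine sub_le_sub_left ?_ _
  calc ((n1 * n2 : ℕ) + 1) * P ≤ ((n1 * n2 : ℕ) + 1) * (30 * ((n1 : ℝ) ^ 12)⁻¹) := by gcongr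
    _ ≤ 2 * (n1 : ℝ) ^ 2 * (30 * ((n1 : ℝ) ^ 12)⁻¹) := by gcongr
    _ = 60 * ((n1 : ℝ) ^ 10)⁻¹ := by field_simp; norm_num
    _ ≤ C * ((n1 : ℝ) ^ 10)⁻¹ := by gcongr

end SqrtPCP

open SqrtPCP in
/-- √PCP with λ = 1/√n1 and μ = √(n2/2) recovers (L0, S0) with error
560·√(n1·n2)·‖Z0‖_F, with probability ≥ 1 − c·n1⁻¹⁰ over the random support and signs. -/
theorem sqrtPCP_main :
    ∃ ρr ρs c : ℝ, 0 < ρr ∧ ρr ≤ 1 / 10 ∧ 0 < ρs ∧ 0 < c ∧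
      ∀ (n1 n2 r m : ℕ) (ν : ℝ), 0 < n2 → n2 ≤ n1 → 0 < ν →
        ∀ (U : Matrix (Fin n1) (Fin r) ℝ) (V : Matrix (Fin n2) (Fin r) ℝ)
          (σ : Fin r → ℝ) (a : Fin n1 × Fin n2 → ℝ) (Z0 : Matrix (Fin n1) (Fin n2) ℝ),
          Uᵀ * U = 1 → Vᵀ * V = 1 → (∀ k, 0 < σ k) → (∀ p, 0 < a p) →
          (∀ i : Fin n1, (∑ k, U i k ^ 2) ≤ ν * r / n1) →
          (∀ j : Fin n2, (∑ k, V j k ^ 2) ≤ ν * r / n2) →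
          (∀ i j, |∑ k, U i k * V j k| ≤ Real.sqrt (ν * r / (n1 * n2))) →
          (r : ℝ) ≤ ρr * n2 * ν⁻¹ * ((Real.log n1) ^ 2)⁻¹ →
          (m : ℝ) ≤ ρs * n1 * n2 →
          1 - c * ((n1 : ℝ) ^ 10)⁻¹ ≤
            unifProb (fun ω : SampleSpace n1 n2 m =>
              ∀ Lh Sh : Matrix (Fin n1) (Fin n2) ℝ,
                IsRootPCPMin (U * Matrix.diagonal σ * Vᵀ + sparseOf a ω + Z0)
                    (Real.sqrt n1)⁻¹ (Real.sqrt ((n2 : ℝ) / 2)) Lh Sh →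
                  pairDist Lh Sh (U * Matrix.diagonal σ * Vᵀ) (sparseOf a ω) ≤
                    560 * Real.sqrt ((n1 : ℝ) * n2) * frob Z0) := by
  obtain ⟨ρs, hρs0, hρs1, hcert⟩ := exists_measureReal_not_exists_isCert_le
  refine ⟨(1 / 2) ^ 42, ρs, 60 + 100 ^ 10, by norm_num, by norm_num, hρs0, by norm_num, ?_⟩
  intro n1 n2 r m ν hn2 hn hν U V s a Z0 hU hV hs ha hrow hcol huv hr hm
  have hn1 : 0 < n1 := hn2.trans_le hn
  rcases lt_or_ge n1 100 with hsmall | hlarge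
  · exact (one_sub_mul_inv_pow_nonpos (c := 100) (by exact_mod_cast hn1)
      (by exact_mod_cast hsmall.le) (by norm_num)).trans (unifProb_nonneg _)
  have hlarge' : (100 : ℝ) ≤ n1 := by exact_mod_cast hlarge
  have hinc : IsIncoherent U V (ν * r) := ⟨hU, hV, hrow, hcol, huv⟩
  have hx : 0 ≤ ν * r := by positivity
  have hxlog := mul_log_sq_le hlarge' hν hr
  have hρ : (m : ℝ) / (n1 * n2 : ℕ) ≤ ρs := by
    rwa [div_le_iff₀ (by exact_mod_cast Nat.mul_pos hn1 hn2), Nat.cast_mul, ← mul_assoc]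
  refine le_trans (one_sub_mul_inv_pow_ten_le hn1 hn ?_ (by norm_num)) ((one_sub_le_unifProb
    (Nat.mul_pos hn1 hn2) (p := ⟨_, by positivity, hρ.trans hρs1⟩) rfl
    {z | ∃ Λ, IsCert U V z.1 z.2 (√n1)⁻¹ Λ}).trans (unifProb_mono ?_))
  · exact hcert hlarge hn2 hn hx hinc hxlog hρ
  · rintro ω ⟨Λ, hΛ⟩ Lh Sh hmin
    rw [sparseOf_eq] at hmin ⊢
    exact pairDist_le_of_isCert hU hV hlarge hn2 (fun k => (hs k).le) (fun p => (ha p).le)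
      ((hinc.l2norm_toMat_symm_le hn1 hn2).trans
        (sqrt_le_of_mul_log_sq_le hlarge' (Nat.cast_nonneg _) hx hxlog)) hΛ hmin
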